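/- Let T be a copyless parity streaming string transducer with n states and m registers. Then there exists a reversible two-way parity transducer S with at most C·n²·m states (for some absolute constant C) such that ⟦S⟧ = ⟦T⟧ as partial functions from A^ω to B^ω. -/

import Mathlib

namespace Paper

/-! ## Two-way parity automata and transducers over infinite words.

An infinite word over an alphabet `A` is a function `ℕ → A`.
A configuration `⊢ u p v` with `w = u v` is encoded as a pair `(p, |u|) : Q × ℕ`.
The left end-marker `⊢` is encoded as `(none : Option A)`. -/

/-- A two-way automaton (without acceptance condition): states `Q` partitioned into forward
states (`fwd`) and backward states, an initial forward state, and a transition relation `Δ`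
over `Q × (A ∪ {⊢}) × Q` where transitions on the end-marker `⊢` (encoded `none`) go from
backward to forward states. -/
structure TwoWayAut (A : Type) where
  Q : Type
  finQ : Fintype Q
  fwd : Q → Prop
  init : Q
  init_fwd : fwd init
  Δ : Set (Q × Option A × Q)
  marker : ∀ p q, (p, (none : Option A), q) ∈ Δ → ¬ fwd p ∧ fwd q

attribute [instance] TwoWayAut.finQ

variable {A B : Type}

/-- `StepVia M w c t c'` : from configuration `c`, using transition `t`, the automaton `M`
reaches the successor configuration `c'` on input word `w`. -/
def StepVia (M : TwoWayAut A) (w : ℕ → A) (c : M.Q × ℕ)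
    (t : M.Q × Option A × M.Q) (c' : M.Q × ℕ) : Prop :=
  t ∈ M.Δ ∧ t.1 = c.1 ∧ t.2.2 = c'.1 ∧
    ((M.fwd c.1 ∧ t.2.1 = some (w c.2) ∧
        ((M.fwd c'.1 ∧ c'.2 = c.2 + 1) ∨ (¬ M.fwd c'.1 ∧ c'.2 = c.2))) ∨
     (¬ M.fwd c.1 ∧ 0 < c.2 ∧ t.2.1 = some (w (c.2 - 1)) ∧
        ((M.fwd c'.1 ∧ c'.2 = c.2) ∨ (¬ M.fwd c'.1 ∧ c'.2 = c.2 - 1))) ∨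
     (¬ M.fwd c.1 ∧ c.2 = 0 ∧ t.2.1 = none ∧ c'.2 = 0))

/-- The successor relation on configurations. -/
def Step (M : TwoWayAut A) (w : ℕ → A) (c c' : M.Q × ℕ) : Prop :=
  ∃ t, StepVia M w c t c'

/-- An infinite run of `M` on `w`, given by its configurations and the transitions taken. -/
def IsRun (M : TwoWayAut A) (w : ℕ → A) (cfg : ℕ → M.Q × ℕ)
    (tr : ℕ → M.Q × Option A × M.Q) : Prop :=
  cfg 0 = (M.init, 0) ∧ ∀ i, StepVia M w (cfg i) (tr i) (cfg (i + 1))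

/-- The run reads the whole word: the prefix lengths are unbounded. -/
def ReadsWhole (M : TwoWayAut A) (cfg : ℕ → M.Q × ℕ) : Prop :=
  ∀ n : ℕ, ∃ i, n ≤ (cfg i).2

/-- `t` occurs infinitely often in the sequence `tr`. -/
def InfOften {T : Type} (tr : ℕ → T) (t : T) : Prop :=
  ∀ n, ∃ i, n ≤ i ∧ tr i = t

def Deterministic (M : TwoWayAut A) : Prop :=
  ∀ p a q q', (p, a, q) ∈ M.Δ → (p, a, q') ∈ M.Δ → q = q'

def Codeterministic (M : TwoWayAut A) : Prop :=
  ∀ p p' a q, (p, a, q) ∈ M.Δ → (p', a, q) ∈ M.Δ → p = p'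

def Reversible (M : TwoWayAut A) : Prop :=
  Deterministic M ∧ Codeterministic M

def Oneway (M : TwoWayAut A) : Prop := ∀ q, M.fwd q

/-- A two-way parity automaton: a two-way automaton together with a finite family of
coloring functions (indexed by `CIdx`). -/
structure ParityAut (A : Type) extends TwoWayAut A where
  CIdx : Type
  finC : Fintype CIdx
  color : CIdx → (Q × Option A × Q) → ℕ

attribute [instance] ParityAut.finC

/-- The parity acceptance condition: for every coloring function, the minimal color of the
transitions taken infinitely often is even. -/
def ParityCond (M : ParityAut A) (tr : ℕ → M.Q × Option A × M.Q) : Prop :=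
  ∀ c : M.CIdx, Even (sInf {m : ℕ | ∃ t, InfOften tr t ∧ M.color c t = m})

/-- Acceptance of an infinite word by a two-way parity automaton. -/
def ParityAut.Accepts (M : ParityAut A) (w : ℕ → A) : Prop :=
  ∃ cfg tr, IsRun M.toTwoWayAut w cfg tr ∧ ReadsWhole M.toTwoWayAut cfg ∧ ParityCond M tr

/-- All colors of `M` (on its transitions) belong to `{0, …, ℓ-1}`. -/
def ColorsLt (M : ParityAut A) (ℓ : ℕ) : Prop :=
  ∀ (c : M.CIdx) t, t ∈ M.Δ → M.color c t < ℓ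

/-- `l` is a prefix of the infinite word `x`. -/
def IsPrefixOf {C : Type} (l : List C) (x : ℕ → C) : Prop :=
  ∀ (i : ℕ) (h : i < l.length), l.get ⟨i, h⟩ = x i

/-- Concatenation of the first `n` words of a sequence of finite words. -/
def prefixCat {C : Type} (f : ℕ → List C) : ℕ → List C
  | 0 => []
  | n + 1 => prefixCat f n ++ f n

/-- The concatenation of the sequence of finite words `f` is the infinite word `x`. -/
def FlattenTo {C : Type} (f : ℕ → List C) (x : ℕ → C) : Prop :=
  (∀ n, IsPrefixOf (prefixCat f n) x) ∧ ∀ m, ∃ n, m ≤ (prefixCat f n).length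

/-- A two-way parity transducer: a two-way parity automaton (whose underlying automaton is
required to be deterministic via hypotheses) together with an output function. -/
structure TwoWayTrans (A B : Type) extends ParityAut A where
  out : (Q × Option A × Q) → List B

/-- `T.Realizes w x` : the word `w` is accepted by (the deterministic transducer) `T`,
the produced output is infinite and equals `x`.  This is the graph of the partial function
`⟦T⟧ : A^ω ⇀ B^ω`. -/
def TwoWayTrans.Realizes (T : TwoWayTrans A B) (w : ℕ → A) (x : ℕ → B) : Prop :=
  ∃ cfg tr, IsRun T.toTwoWayAut w cfg tr ∧ ReadsWhole T.toTwoWayAut cfg ∧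
    ParityCond T.toParityAut tr ∧ FlattenTo (fun i => T.out (tr i)) x

/-- A two-way Büchi transducer: accepting transitions `acc` instead of coloring functions. -/
structure BuchiTrans (A B : Type) extends TwoWayAut A where
  acc : Set (Q × Option A × Q)
  out : (Q × Option A × Q) → List B

def BuchiTrans.Realizes (T : BuchiTrans A B) (w : ℕ → A) (x : ℕ → B) : Prop :=
  ∃ cfg tr, IsRun T.toTwoWayAut w cfg tr ∧ ReadsWhole T.toTwoWayAut cfg ∧
    (∀ n, ∃ i, n ≤ i ∧ tr i ∈ T.acc) ∧ FlattenTo (fun i => T.out (tr i)) x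

/-- A two-way transducer with no acceptance condition. -/
structure NoAccTrans (A B : Type) extends TwoWayAut A where
  out : (Q × Option A × Q) → List B

def NoAccTrans.Realizes (T : NoAccTrans A B) (w : ℕ → A) (x : ℕ → B) : Prop :=
  ∃ cfg tr, IsRun T.toTwoWayAut w cfg tr ∧ ReadsWhole T.toTwoWayAut cfg ∧
    FlattenTo (fun i => T.out (tr i)) x

/-! ## One-way parity automata, transducers, and copyless parity streaming string
transducers.  A one-way automaton has only forward states and never reads the end-marker,
so we use a simplified (equivalent) presentation. -/

structure OnewayAut (A : Type) where
  Q : Type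
  finQ : Fintype Q
  init : Q
  Δ : Set (Q × A × Q)
  CIdx : Type
  finC : Fintype CIdx
  color : CIdx → (Q × A × Q) → ℕ

attribute [instance] OnewayAut.finQ
attribute [instance] OnewayAut.finC

def OnewayDet (M : OnewayAut A) : Prop :=
  ∀ p a q q', (p, a, q) ∈ M.Δ → (p, a, q') ∈ M.Δ → q = q'

def OnewayRun (M : OnewayAut A) (w : ℕ → A) (s : ℕ → M.Q) : Prop :=
  s 0 = M.init ∧ ∀ i, (s i, w i, s (i + 1)) ∈ M.Δ

def OnewayParityCond (M : OnewayAut A) (tr : ℕ → M.Q × A × M.Q) : Prop :=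
  ∀ c : M.CIdx, Even (sInf {m : ℕ | ∃ t, InfOften tr t ∧ M.color c t = m})

def OnewayAut.Accepts (M : OnewayAut A) (w : ℕ → A) : Prop :=
  ∃ s, OnewayRun M w s ∧ OnewayParityCond M (fun i => (s i, w i, s (i + 1)))

def OnewayColorsLt (M : OnewayAut A) (ℓ : ℕ) : Prop :=
  ∀ (c : M.CIdx) t, t ∈ M.Δ → M.color c t < ℓ

/-- A one-way (deterministic) parity transducer. -/
structure OnewayTrans (A B : Type) extends OnewayAut A where
  out : (Q × A × Q) → List B

def OnewayTrans.Realizes (T : OnewayTrans A B) (w : ℕ → A) (x : ℕ → B) : Prop :=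
  ∃ s, OnewayRun T.toOnewayAut w s ∧
    OnewayParityCond T.toOnewayAut (fun i => (s i, w i, s (i + 1))) ∧
    FlattenTo (fun i => T.out (s i, w i, s (i + 1))) x

/-- Number of occurrences of `a` in the list `l` (classically). -/
noncomputable def occ {C : Type} (a : C) (l : List C) : ℕ :=
  l.countP fun x => @decide (x = a) (Classical.propDecidable _)

/-- A substitution `σ : R → (R ⊎ B)*` is copyless if every register occurs at most once in
the concatenation of all the `σ r'`. -/
def Copyless {R C : Type} [Fintype R] (σ : R → List (R ⊕ C)) : Prop :=
  ∀ r : R, (∑ r' : R, occ (Sum.inl r) (σ r')) ≤ 1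

/-- Applying an assignment `ν : R → B*` (extended to a morphism `(R ⊎ B)* → B*`). -/
def subApply {R C : Type} (ν : R → List C) : List (R ⊕ C) → List C
  | [] => []
  | Sum.inl r :: l => ν r ++ subApply ν l
  | Sum.inr b :: l => b :: subApply ν l

/-- A copyless parity streaming string transducer: a (deterministic) one-way parity
automaton with a finite set `R` of registers, a distinguished output register, and copyless
register updates, where the update of `outReg` always starts with `outReg`. -/
structure CPSST (A B : Type) extends OnewayAut A where
  R : Type
  finR : Fintype R
  outReg : R
  upd : (Q × A × Q) → R → List (R ⊕ B)
  copyless : ∀ t, @Copyless R B finR (upd t)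
  out_form : ∀ t, ∃ γ, upd t outReg = Sum.inl outReg :: γ

attribute [instance] CPSST.finR

/-- The register contents along a run: `ν_0 r = ε` and `ν_{i+1} = ν_i ∘ λ(t_i)`. -/
def regVal (T : CPSST A B) (w : ℕ → A) (s : ℕ → T.Q) : ℕ → T.R → List B
  | 0 => fun _ => []
  | i + 1 => fun r => subApply (regVal T w s i) (T.upd (s i, w i, s (i + 1)) r)

/-- `T.Realizes w x` : the (deterministic) CPSST `T` has an accepting run on `w` whose
output-register contents are unbounded with limit `x`. -/
def CPSST.Realizes (T : CPSST A B) (w : ℕ → A) (x : ℕ → B) : Prop :=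
  ∃ s, OnewayRun T.toOnewayAut w s ∧
    OnewayParityCond T.toOnewayAut (fun i => (s i, w i, s (i + 1))) ∧
    (∀ i, IsPrefixOf (regVal T w s i T.outReg) x) ∧
    (∀ m, ∃ i, m ≤ (regVal T w s i T.outReg).length)

/-- The one-way parity transducer with the same underlying automaton as the CPSST `T`,
which outputs on each transition the (copyless) substitution that `T` applies. -/
def enrich (T : CPSST A B) :
    OnewayTrans A {σ : T.R → List (T.R ⊕ B) // Copyless σ} where
  toOnewayAut := T.toOnewayAut
  out := fun t => [⟨T.upd t, T.copyless t⟩]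

/-! ## Merging forests -/

/-- A merging forest on `(Q⁺ ⊎ Q⁻, χ, ℓ)`: a finite rooted forest (given by a `parent` map
with no cycles) whose leaves (childless nodes) are injectively labeled in `Q⁻` and carry a
`χ`-tuple of integers `< ℓ`, whose roots are injectively labeled in `Q⁺`, and in which every
unary node (exactly one child) is a root. -/
structure MForest (Qp Qm χ : Type) (ℓ : ℕ) where
  V : Type
  finV : Fintype V
  parent : V → Option V
  acyc : ∀ v : V, ¬ Relation.TransGen (fun a b => parent a = some b) v v
  leafLab : V → Qm
  rootLab : V → Qp
  tup : V → χ → ℕ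
  tup_lt : ∀ v, (∀ u, parent u ≠ some v) → ∀ c, tup v c < ℓ
  leaf_inj : ∀ u v, (∀ u', parent u' ≠ some u) → (∀ v', parent v' ≠ some v) →
    leafLab u = leafLab v → u = v
  root_inj : ∀ u v, parent u = none → parent v = none → rootLab u = rootLab v → u = v
  unary_root : ∀ v : V, (∃! u, parent u = some v) → parent v = none

attribute [instance] MForest.finV

/-- Isomorphism of merging forests: a bijection of the nodes commuting with `parent` and
preserving the leaf labels, the leaf tuples and the root labels. -/
def MFIso {Qp Qm χ : Type} {ℓ : ℕ} (F G : MForest Qp Qm χ ℓ) : Prop :=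
  ∃ e : F.V ≃ G.V,
    (∀ v, G.parent (e v) = Option.map e (F.parent v)) ∧
    (∀ v, (∀ u, F.parent u ≠ some v) →
      F.leafLab v = G.leafLab (e v) ∧ ∀ c, F.tup v c = G.tup (e v) c) ∧
    (∀ v, F.parent v = none → F.rootLab v = G.rootLab (e v))

end Paper

/-!
The output of `T` is a walk along the gaps between registers in the updates of its run. At each
letter, copylessness makes the relation of being separated by a gap a matching of register ports, so
the walk can be done by a machine all of whose moves are symmetric matchings; for such a machine
determinism is the same as codeterminism.

The walker must know the state of `T` to apply the right update, and a deterministic run is not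
codeterministic: going left, the state is ambiguous. The transitions of `T` on the input form a
forest in which the parent of a state is its successor, and the run is a branch of it. Two climbers
leave the run at a position and follow the contour of this forest, one on each side of the branch.
Each enclosed side tree is finite, and a reversible orbit can neither repeat a configuration nor
meet its own reversal, so the climbers escape; they are again on both sides of the same node exactly
when they are back on the run, one position further. Played backward, this recovers the state at the
previous position.

A configuration is thus a pair of climbers (`4 * n ^ 2`), an end of a register (`2 * m`) and a
direction (`2`).
-/

namespace Paper

/-! ### Port machines -/

/-- An element tagged with a side, moved to the other side. -/
def opp {α : Type*} (x : α × Bool) : α × Bool := (x.1, !x.2)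

@[simp] theorem opp_opp {α : Type*} (x : α × Bool) : opp (opp x) = x := by simp [opp]

theorem opp_injective {α : Type*} : Function.Injective (opp : α × Bool → α × Bool) :=
  Function.LeftInverse.injective opp_opp

theorem opp_ne {α : Type*} (x : α × Bool) : opp x ≠ x := by
  intro h
  simpa [opp] using congrArg Prod.snd h

/-- The position of the head at the left (`true`) or right (`false`) side of the letter `k`. -/
def boundary (k : ℕ) (d : Bool) : ℕ := bif d then k else k + 1

theorem boundary_injective {d : Bool} : Function.Injective fun k => boundary k d := by
  intro k k' h
  cases d <;> simpa [boundary] using h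

theorem boundary_le (k : ℕ) (d : Bool) : boundary k d ≤ k + 1 := by
  cases d <;> simp [boundary]

/-- A configuration: a state together with a head position. A state `(p, true)` moves forward, a
state `(p, false)` moves backward. -/
abbrev Conf (P : Type*) := (P × Bool) × ℕ

section Conf

variable {P : Type*}

/-- The configuration about to read the letter `k` from its port `x`. -/
def enter (k : ℕ) (x : P × Bool) : Conf P := (x, boundary k x.2)

/-- The configuration having just left the letter `k` through its port `y`. -/
def leave (k : ℕ) (y : P × Bool) : Conf P := (opp y, boundary k y.2)

/-- Time reversal of configurations. -/
def rev (c : Conf P) : Conf P := (opp c.1, c.2)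

@[simp] theorem rev_rev (c : Conf P) : rev (rev c) = c := by simp [rev]

theorem rev_ne (c : Conf P) : rev c ≠ c := fun h => opp_ne c.1 (congrArg Prod.fst h)

@[simp] theorem rev_enter (k : ℕ) (x : P × Bool) : rev (enter k x) = leave k x := rfl

@[simp] theorem rev_leave (k : ℕ) (x : P × Bool) : rev (leave k x) = enter k x := by
  rw [← rev_enter, rev_rev]

theorem enter_inj {k k' : ℕ} {x x' : P × Bool} :
    enter k x = enter k' x' ↔ k = k' ∧ x = x' := by
  refine ⟨fun h => ?_, fun h => by rw [h.1, h.2]⟩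
  obtain ⟨rfl, h⟩ := Prod.mk.inj h
  exact ⟨boundary_injective h, rfl⟩

theorem enter_ne_mark (k : ℕ) (x : P × Bool) (p : P) : enter k x ≠ ((p, false), 0) := by
  intro h
  obtain ⟨rfl, h⟩ := Prod.mk.inj h
  simp [boundary] at h

theorem conf_cases (c : Conf P) : (∃ k x, c = enter k x) ∨ ∃ p, c = ((p, false), 0) := by
  rcases c with ⟨⟨p, _ | _⟩, _ | k⟩
  · exact Or.inr ⟨p, rfl⟩
  · exact Or.inl ⟨k, (p, false), rfl⟩
  all_goals exact Or.inl ⟨_, (p, true), rfl⟩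

end Conf

/-- A reversible two-way machine given by matchings of ports. A letter has a left and a right copy
of every element of `P` as its ports, and `box a x y l` says that a head entering `a` through `x`
leaves it through `y` with label `l`; `mark` matches the ports of the end-marker, whose traversals
are labeled `silent`. Reversibility is the symmetry of both matchings. -/
structure PortMachine (A P L : Type*) where
  box : A → P × Bool → P × Bool → L → Prop
  mark : P → P → Prop
  silent : L
  box_symm : ∀ {a x y l}, box a x y l → box a y x l
  box_unique : ∀ {a x y y' l l'}, box a x y l → box a x y' l' → y = y' ∧ l = l'
  mark_symm : ∀ {p p'}, mark p p' → mark p' p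
  mark_unique : ∀ {p p' p''}, mark p p' → mark p p'' → p' = p''

namespace PortMachine

section Step

variable {A P L : Type*} (M : PortMachine A P L) {w : ℕ → A} {c c' : Conf P} {l l' : L}

/-- The labeled steps of a port machine on the word `w`. -/
inductive Step (w : ℕ → A) : Conf P → Conf P → L → Prop
  | letter {k x y l} : M.box (w k) x y l → Step w (enter k x) (leave k y) l
  | mark {p p'} : M.mark p p' → Step w ((p, false), 0) ((p', true), 0) M.silent

/-- The unlabeled steps of a port machine. -/
def Next (w : ℕ → A) (c c' : Conf P) : Prop := ∃ l, M.Step w c c' l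

variable {M}

theorem step_enter_iff {k : ℕ} {x : P × Bool} :
    M.Step w (enter k x) c l ↔ ∃ y, M.box (w k) x y l ∧ c = leave k y := by
  constructor
  · generalize he : enter k x = e
    rintro (hb | hm)
    · obtain ⟨rfl, rfl⟩ := enter_inj.1 he
      exact ⟨_, hb, rfl⟩
    · exact absurd he (enter_ne_mark _ _ _)
  · rintro ⟨y, hb, rfl⟩
    exact .letter hb

theorem step_mark_iff {p : P} :
    M.Step w ((p, false), 0) c l ↔ ∃ p', M.mark p p' ∧ c = ((p', true), 0) ∧ l = M.silent := by
  constructor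
  · generalize he : (((p, false), 0) : Conf P) = e
    rintro (hb | hm)
    · exact absurd he.symm (enter_ne_mark _ _ _)
    · obtain ⟨⟨rfl, -⟩, -⟩ := by simpa only [Prod.mk.injEq] using he
      exact ⟨_, hm, rfl, rfl⟩
  · rintro ⟨p', hm, rfl, rfl⟩
    exact .mark hm

theorem Step.rev (h : M.Step w c c' l) : M.Step w (rev c') (rev c) l := by
  cases h with
  | letter hb =>
    rw [rev_leave, rev_enter]
    exact .letter (M.box_symm hb)
  | mark hm => exact .mark (M.mark_symm hm)

theorem Step.unique {c'' : Conf P} (h : M.Step w c c' l) (h' : M.Step w c c'' l') :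
    c' = c'' ∧ l = l' := by
  rcases conf_cases c with ⟨k, x, rfl⟩ | ⟨p, rfl⟩
  · obtain ⟨y, hb, rfl⟩ := step_enter_iff.1 h
    obtain ⟨y', hb', rfl⟩ := step_enter_iff.1 h'
    obtain ⟨rfl, rfl⟩ := M.box_unique hb hb'
    exact ⟨rfl, rfl⟩
  · obtain ⟨p', hm, rfl, rfl⟩ := step_mark_iff.1 h
    obtain ⟨p'', hm', rfl, rfl⟩ := step_mark_iff.1 h'
    rw [M.mark_unique hm hm']
    exact ⟨rfl, rfl⟩

theorem Next.rev (h : M.Next w c c') : M.Next w (rev c') (rev c) :=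
  h.imp fun _ => Step.rev

theorem next_rightUnique (M : PortMachine A P L) (w : ℕ → A) : Relator.RightUnique (M.Next w) :=
  fun _ _ _ ⟨_, h⟩ ⟨_, h'⟩ => (h.unique h').1

theorem next_leftUnique (M : PortMachine A P L) (w : ℕ → A) : Relator.LeftUnique (M.Next w) := by
  intro c c' d h h'
  rw [← rev_rev c, next_rightUnique M w h.rev h'.rev, rev_rev]

theorem not_next_start {p₀ : P} (hp₀ : ∀ p, ¬ M.mark p₀ p) (c : Conf P) :
    ¬ M.Next w c ((p₀, true), 0) := by
  rintro ⟨l, h⟩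
  obtain ⟨p, hm, -⟩ := step_mark_iff.1 h.rev
  exact hp₀ p hm

end Step

end PortMachine

/-! ### Orbits of reversible relations -/

section Orbit

variable {C : Type*} {f : C → C → Prop} {c₀ c : C} {n m : ℕ}

/-- `ReachesIn f c₀ n c`: the relation `f` leads from `c₀` to `c` in exactly `n` steps. -/
inductive ReachesIn (f : C → C → Prop) (c₀ : C) : ℕ → C → Prop
  | zero : ReachesIn f c₀ 0 c₀
  | succ {n c c'} : ReachesIn f c₀ n c → f c c' → ReachesIn f c₀ (n + 1) c'

namespace ReachesIn

theorem zero_iff : ReachesIn f c₀ 0 c ↔ c = c₀ :=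
  ⟨fun h => by cases h; rfl, fun h => h ▸ zero⟩

theorem succ_iff : ReachesIn f c₀ (n + 1) c ↔ ∃ d, ReachesIn f c₀ n d ∧ f d c :=
  ⟨fun h => by cases h with | succ h hf => exact ⟨_, h, hf⟩, fun ⟨_, h, hf⟩ => h.succ hf⟩

theorem of_forall_succ {g : ℕ → C} (hg : ∀ n, f (g n) (g (n + 1))) (n : ℕ) :
    ReachesIn f (g 0) n (g n) := by
  induction n with
  | zero => exact zero
  | succ n ih => exact ih.succ (hg n)

theorem unique (hf : Relator.RightUnique f) {c' : C} (h : ReachesIn f c₀ n c)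
    (h' : ReachesIn f c₀ n c') : c = c' := by
  induction n generalizing c c' with
  | zero => rw [zero_iff.1 h, zero_iff.1 h']
  | succ n ih =>
    obtain ⟨d, h, hd⟩ := succ_iff.1 h
    obtain ⟨d', h', hd'⟩ := succ_iff.1 h'
    rw [ih h h'] at hd
    exact hf hd hd'

theorem time_unique (hf : Relator.LeftUnique f) (h₀ : ∀ c, ¬ f c c₀) (h : ReachesIn f c₀ n c)
    (h' : ReachesIn f c₀ m c) : n = m := by
  induction n generalizing m c with
  | zero =>
    obtain rfl := zero_iff.1 h
    cases m with
    | zero => rfl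
    | succ m =>
      obtain ⟨d, -, hd⟩ := succ_iff.1 h'
      exact absurd hd (h₀ d)
  | succ n ih =>
    obtain ⟨d, h, hd⟩ := succ_iff.1 h
    cases m with
    | zero =>
      rw [zero_iff.1 h'] at hd
      exact absurd hd (h₀ d)
    | succ m =>
      obtain ⟨d', h', hd'⟩ := succ_iff.1 h'
      rw [hf hd' hd] at h'
      rw [ih h h']

theorem exists_of_le (h : ReachesIn f c₀ n c) (hm : m ≤ n) : ∃ d, ReachesIn f c₀ m d := by
  induction n, hm using Nat.le_induction generalizing c with
  | base => exact ⟨c, h⟩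
  | succ n _ ih =>
    obtain ⟨d, h, -⟩ := succ_iff.1 h
    exact ih h

theorem reflTransGen_of_le {r : C → C → Prop} {e : C} (hf : Relator.RightUnique f)
    (hr : ∀ k c c', m ≤ k → k < n → ReachesIn f c₀ k c → ReachesIn f c₀ (k + 1) c' → f c c' →
      r c c')
    (hm : ReachesIn f c₀ m c) (hn : ReachesIn f c₀ n e) (hmn : m ≤ n) :
    Relation.ReflTransGen r c e := by
  induction n, hmn using Nat.le_induction generalizing e with
  | base => rw [hm.unique hf hn]
  | succ n hmn ih =>
    obtain ⟨d, hd, hde⟩ := succ_iff.1 hn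
    exact (ih (fun k c c' h h' => hr k c c' h (h'.trans n.lt_succ_self)) hd).tail
      (hr n d e hmn n.lt_succ_self hd hn hde)

/-- If an orbit met a configuration and its reversal, the part of the orbit between the two would
be its own reversal, hence would turn around in its middle. -/
theorem not_reversal {ρ : C → C} (hf : Relator.RightUnique f) (hρ : Function.Involutive ρ)
    (hfρ : ∀ {c c'}, f c c' → f (ρ c') (ρ c)) (hne : ∀ c, ρ c ≠ c) (hnf : ∀ c, ¬ f c (ρ c))
    (h : ReachesIn f c₀ n c) : ¬ ReachesIn f c₀ m (ρ c) := by
  intro h'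
  wlog hnm : n ≤ m generalizing n m c
  · exact this h' (by rwa [hρ c]) (Nat.le_of_not_ge hnm)
  obtain ⟨k, rfl⟩ := Nat.exists_eq_add_of_le hnm
  clear hnm
  induction k using Nat.strong_induction_on generalizing n c with
  | _ k ih =>
    match k with
    | 0 => exact hne c (h'.unique hf h)
    | 1 =>
      obtain ⟨d, hd, hdc⟩ := succ_iff.1 h'
      rw [hd.unique hf h] at hdc
      exact hnf c hdc
    | k + 2 =>
      obtain ⟨d, hd, hdc⟩ := succ_iff.1 (show ReachesIn f c₀ (n + k + 1 + 1) (ρ c) from h')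
      have hcd : f c (ρ d) := by simpa only [hρ c] using hfρ hdc
      refine ih k (by omega) (h.succ hcd) ?_
      rwa [hρ d, Nat.add_right_comm]

/-- An orbit without repetitions stays in a finite set only until it meets the exit `e`. -/
theorem exists_of_finite {V : Set C} {e : C} (hf : Relator.LeftUnique f) (h₀ : ∀ c, ¬ f c c₀)
    (hV : V.Finite) (hc₀ : c₀ ∈ V)
    (hclosed : ∀ {n c}, ReachesIn f c₀ n c → c ∈ V → c ≠ e → ∃ c' ∈ V, f c c') :
    ∃ n, ReachesIn f c₀ n e ∧ ∀ k < n, ∃ c ∈ V, ReachesIn f c₀ k c := by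
  classical
  have stays : ∀ n, (∀ k < n, ¬ ReachesIn f c₀ k e) → ∃ c ∈ V, ReachesIn f c₀ n c := by
    intro n hn
    induction n with
    | zero => exact ⟨c₀, hc₀, zero⟩
    | succ n ih =>
      obtain ⟨c, hcV, hc⟩ := ih fun k hk => hn k (hk.trans n.lt_succ_self)
      obtain ⟨c', hc'V, hcc'⟩ := hclosed hc hcV (by rintro rfl; exact hn n n.lt_succ_self hc)
      exact ⟨c', hc'V, hc.succ hcc'⟩
  have hits : ∃ n, ReachesIn f c₀ n e := by
    by_contra! hnever
    choose g hgV hg using fun n => stays n fun k _ => hnever k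
    have hinj : Function.Injective g := fun n m hnm =>
      (hg n).time_unique hf h₀ (by rw [hnm]; exact hg m)
    exact Set.infinite_of_injective_forall_mem hinj hgV hV
  exact ⟨Nat.find hits, Nat.find_spec hits, fun k hk =>
    stays k fun j hj => Nat.find_min hits (hj.trans hk)⟩

end ReachesIn

end Orbit

/-! ### Contours of forests -/

section ClimberPair

variable {Q : Type*}

/-- The joint state of two climbers. -/
abbrev ClimberPair (Q : Type*) : Type _ := (Q × Bool) × (Q × Bool)

/-- The state in which the two climbers are on both sides of the same node `q`. -/
def syncState (q : Q) : ClimberPair Q := ((q, true), (q, false))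

/-- The port through which two climbers on both sides of `q` enter the next letter. -/
def syncPort (q : Q) : ClimberPair Q × Bool := (syncState q, true)

theorem syncState_injective : Function.Injective (syncState : Q → ClimberPair Q) :=
  fun _ _ h => congrArg (fun z => z.1.1) h

theorem syncPort_injective : Function.Injective (syncPort : Q → ClimberPair Q × Bool) :=
  fun _ _ h => syncState_injective (congrArg Prod.fst h)

variable [DecidableEq Q]

/-- A climber meeting the end-marker turns around, except at the root `q₀`, where it stays on its
side of the contour. -/
def turn (q₀ : Q) (x : Q × Bool) : Q × Bool := if x.1 = q₀ then x else opp x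

theorem turn_fst (q₀ : Q) (x : Q × Bool) : (turn q₀ x).1 = x.1 := by
  unfold turn
  split <;> rfl

theorem turn_of_eq {q₀ : Q} {x : Q × Bool} (h : x.1 = q₀) : turn q₀ x = x := if_pos h

theorem turn_of_ne {q₀ : Q} {x : Q × Bool} (h : x.1 ≠ q₀) : turn q₀ x = opp x := if_neg h

theorem turn_eq_self_iff {q₀ : Q} {x : Q × Bool} : turn q₀ x = x ↔ x.1 = q₀ :=
  ⟨fun h => by_contra fun hne => opp_ne x (turn_of_ne hne ▸ h), turn_of_eq⟩

@[simp] theorem turn_turn (q₀ : Q) (x : Q × Bool) : turn q₀ (turn q₀ x) = x := by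
  by_cases h : x.1 = q₀
  · rw [turn_of_eq h, turn_of_eq h]
  · rw [turn_of_ne h, turn_of_ne (x := opp x) h, opp_opp]

/-- The matching of the ports of the end-marker for two climbers; it does not match the ports at
which both climbers are at the root `q₀`. -/
def PairTurn (q₀ : Q) (z z' : ClimberPair Q) : Prop :=
  z' = (turn q₀ z.1, turn q₀ z.2) ∧ ¬ (z.1.1 = q₀ ∧ z.2.1 = q₀)

namespace PairTurn

variable {q₀ : Q} {z z' z'' : ClimberPair Q}

theorem symm (h : PairTurn q₀ z z') : PairTurn q₀ z' z := by
  obtain ⟨rfl, h⟩ := h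
  simpa only [PairTurn, turn_turn, turn_fst, true_and] using h

theorem unique (h : PairTurn q₀ z z') (h' : PairTurn q₀ z z'') : z' = z'' :=
  h.1.trans h'.1.symm

theorem irrefl (z : ClimberPair Q) : ¬ PairTurn q₀ z z := fun h =>
  h.2 ⟨turn_eq_self_iff.1 (congrArg Prod.fst h.1).symm,
    turn_eq_self_iff.1 (congrArg Prod.snd h.1).symm⟩

theorem not_syncState (z : ClimberPair Q) : ¬ PairTurn q₀ (syncState q₀) z :=
  fun h => h.2 ⟨rfl, rfl⟩

end PairTurn

end ClimberPair

section Contour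

variable {Q : Type*} [LinearOrder Q]

/-- `OnSide ε q q'`: the node `q'` lies strictly on the side `ε` of its sibling `q`, above it if `ε`
is `true` and below it if `ε` is `false`. -/
def OnSide (ε : Bool) (q q' : Q) : Prop := bif ε then q < q' else q' < q

theorem onSide_not_iff {ε : Bool} {q q' : Q} : OnSide (!ε) q q' ↔ OnSide ε q' q := by
  cases ε <;> rfl

theorem onSide_trichotomy (ε : Bool) (q q' : Q) : OnSide ε q q' ∨ q = q' ∨ OnSide ε q' q := by
  cases ε
  · simpa only [OnSide, cond_false, eq_comm (a := q)] using lt_trichotomy q' q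
  · exact lt_trichotomy q q'

theorem not_onSide_self (ε : Bool) (q : Q) : ¬ OnSide ε q q := by
  cases ε <;> exact lt_irrefl q

theorem OnSide.trans {ε : Bool} {q q' q'' : Q} (h : OnSide ε q q') (h' : OnSide ε q' q'') :
    OnSide ε q q'' := by
  cases ε
  · exact lt_trans (α := Q) h' h
  · exact lt_trans (α := Q) h h'

theorem exists_outermost [Finite Q] (ε : Bool) {S : Set Q} (hS : S.Nonempty) :
    ∃ q ∈ S, ∀ p ∈ S, ¬ OnSide ε q p := by
  cases ε
  · obtain ⟨q, hq, hmin⟩ := S.exists_min_image id S.toFinite hS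
    exact ⟨q, hq, fun p hp => not_lt_of_ge (hmin p hp)⟩
  · obtain ⟨q, hq, hmax⟩ := S.exists_max_image id S.toFinite hS
    exact ⟨q, hq, fun p hp => not_lt_of_ge (hmax p hp)⟩

variable {A : Type*} (E : A → Q → Q → Prop)

/-- `q` is the outermost child of `q'` on the side `ε`, where `E a q q'` says that `q'` is the
parent of `q` across the letter `a`. -/
def Outermost (a : A) (ε : Bool) (q q' : Q) : Prop :=
  E a q q' ∧ ∀ p, E a p q' → ¬ OnSide ε q p

/-- `q` and `p` are children of `q'` and `p` is the next one on the side `ε` of `q`. -/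
def Adjacent (a : A) (ε : Bool) (q p q' : Q) : Prop :=
  E a q q' ∧ E a p q' ∧ OnSide ε q p ∧ ∀ r, E a r q' → OnSide ε q r → ¬ OnSide ε r p

/-- The contour of a forest across the letter `a`. A climber `(q, ε)` follows the contour along the
side `ε` of the node `q`; nodes are on the left of a letter, their parents on the right. -/
inductive Contour (a : A) : (Q × Bool) × Bool → (Q × Bool) × Bool → Prop
  | up {q q' ε} : Outermost E a ε q q' → Contour a ((q, ε), true) ((q', ε), false)
  | down {q q' ε} : Outermost E a ε q q' → Contour a ((q', ε), false) ((q, ε), true)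
  | next {q p q' ε} : Adjacent E a ε q p q' → Contour a ((q, ε), true) ((p, !ε), true)
  | leaf {q ε} : (∀ p, ¬ E a p q) → Contour a ((q, ε), false) ((q, !ε), false)

variable {E} {a : A}

theorem Outermost.unique {ε : Bool} {q p q' : Q} (hq : Outermost E a ε q q')
    (hp : Outermost E a ε p q') : q = p := by
  rcases onSide_trichotomy ε q p with h | h | h
  · exact absurd h (hq.2 p hp.1)
  · exact h
  · exact absurd h (hp.2 q hq.1)

theorem Adjacent.symm {ε : Bool} {q p q' : Q} (h : Adjacent E a ε q p q') :
    Adjacent E a (!ε) p q q' :=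
  ⟨h.2.1, h.1, onSide_not_iff.2 h.2.2.1,
    fun r hr hpr hrq => h.2.2.2 r hr (onSide_not_iff.1 hrq) (onSide_not_iff.1 hpr)⟩

theorem Adjacent.unique {ε : Bool} {q p r q' : Q} (hp : Adjacent E a ε q p q')
    (hr : Adjacent E a ε q r q') : p = r := by
  rcases onSide_trichotomy ε p r with h | h | h
  · exact absurd h (hr.2.2.2 p hp.2.1 hp.2.2.1)
  · exact h
  · exact absurd h (hp.2.2.2 r hr.2.1 hr.2.2.1)

namespace Contour

variable {x y y' : (Q × Bool) × Bool}

theorem symm (h : Contour E a x y) : Contour E a y x := by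
  cases h with
  | up h => exact down h
  | down h => exact up h
  | @next q p _ ε h => simpa only [Bool.not_not] using next h.symm
  | @leaf q ε h => simpa only [Bool.not_not] using leaf (ε := !ε) h

theorem unique (hE : Relator.RightUnique (E a)) (h : Contour E a x y) (h' : Contour E a x y') :
    y = y' := by
  cases h with
  | up h => cases h' with
    | up h' => rw [hE h.1 h'.1]
    | next h' => exact absurd h'.2.2.1 (h.2 _ (hE h'.1 h.1 ▸ h'.2.1))
  | down h => cases h' with
    | down h' => rw [h.unique h']
    | leaf h' => exact absurd h.1 (h' _)
  | next h => cases h' with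
    | up h' => exact absurd h.2.2.1 (h'.2 _ (hE h.1 h'.1 ▸ h.2.1))
    | next h' =>
      obtain rfl := hE h.1 h'.1
      rw [h.unique h']
  | leaf h => cases h' with
    | down h' => exact absurd h'.1 (h _)
    | leaf _ => rfl

theorem flip {x y : Q × Bool} {d : Bool} (h : Contour E a (x, d) (y, d)) : y.2 = !x.2 := by
  cases h <;> rfl

theorem exists_of_left [Finite Q] {q q' : Q} (hq : E a q q') (ε : Bool) :
    ∃ y, Contour E a ((q, ε), true) y := by
  by_cases houter : ∀ p, E a p q' → ¬ OnSide ε q p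
  · exact ⟨_, up ⟨hq, houter⟩⟩
  · push Not at houter
    obtain ⟨p, ⟨hp, hqp⟩, hmin⟩ :=
      exists_outermost (!ε) (S := {p | E a p q' ∧ OnSide ε q p}) houter
    exact ⟨_, next ⟨hq, hp, hqp, fun r hr hqr hrp => hmin r ⟨hr, hqr⟩ (onSide_not_iff.2 hrp)⟩⟩

theorem exists_of_right [Finite Q] (E : A → Q → Q → Prop) (a : A) (q : Q) (ε : Bool) :
    ∃ y, Contour E a ((q, ε), false) y := by
  by_cases hleaf : ∀ p, ¬ E a p q
  · exact ⟨_, leaf hleaf⟩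
  · push Not at hleaf
    obtain ⟨p, hp, hmax⟩ := exists_outermost ε (S := {p | E a p q}) hleaf
    exact ⟨_, down ⟨hp, hmax⟩⟩

end Contour

variable (E)

/-- Two climbers crossing a letter in a synchronized manner: if they disagree on the side of the
letter to leave through, the one that would change sides waits for the other. -/
inductive PairContour (a : A) : ClimberPair Q × Bool → ClimberPair Q × Bool → Prop
  | both {x y x' y' d d'} : Contour E a (x, d) (x', d') → Contour E a (y, d) (y', d') →
      PairContour a ((x, y), d) ((x', y'), d')
  | left {x y x' y' d} : Contour E a (x, d) (x', d) → Contour E a (y, d) (y', !d) →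
      PairContour a ((x, y), d) ((x', y), d)
  | right {x y x' y' d} : Contour E a (x, d) (x', !d) → Contour E a (y, d) (y', d) →
      PairContour a ((x, y), d) ((x, y'), d)

variable {E}

namespace PairContour

variable {x y y' : ClimberPair Q × Bool}

theorem symm (h : PairContour E a x y) : PairContour E a y x := by
  cases h with
  | both hx hy => exact both hx.symm hy.symm
  | left hx hy => exact left hx.symm hy
  | right hx hy => exact right hx hy.symm

theorem unique (hE : Relator.RightUnique (E a)) (h : PairContour E a x y)
    (h' : PairContour E a x y') : y = y' := by
  rcases h with ⟨hx, hy⟩ | ⟨hx, hy⟩ | ⟨hx, hy⟩ <;>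
    rcases h' with ⟨hx', hy'⟩ | ⟨hx', hy'⟩ | ⟨hx', hy'⟩ <;>
    have ex := hx.unique hE hx' <;> have ey := hy.unique hE hy' <;> simp_all

theorem flip {z z' : ClimberPair Q} {d : Bool} (h : PairContour E a (z, d) (z', d)) :
    z'.1.2 = !z.1.2 ∨ z'.2.2 = !z.2.2 := by
  cases h with
  | both hx _ => exact Or.inl hx.flip
  | left hx _ => exact Or.inl hx.flip
  | right _ hy => exact Or.inr hy.flip

theorem irrefl (x : ClimberPair Q × Bool) : ¬ PairContour E a x x := by
  intro h
  simpa using h.flip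

theorem not_syncPort (p q : Q) : ¬ PairContour E a (syncPort p) (syncPort q) := by
  intro h
  simpa [syncState] using h.flip

theorem exists_of_contour {z : ClimberPair Q} {d : Bool} {u v : (Q × Bool) × Bool}
    (hu : Contour E a (z.1, d) u) (hv : Contour E a (z.2, d) v) :
    ∃ y, PairContour E a (z, d) y ∧ ((y.1.1, y.2) = (z.1, d) ∨ (y.1.1, y.2) = u) ∧
      ((y.1.2, y.2) = (z.2, d) ∨ (y.1.2, y.2) = v) := by
  obtain ⟨x', d₁⟩ := u
  obtain ⟨y', d₂⟩ := v
  by_cases h₁₂ : d₁ = d₂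
  · subst h₁₂
    exact ⟨_, both hu hv, Or.inr rfl, Or.inr rfl⟩
  · by_cases h₁ : d₁ = d
    · obtain rfl : d₂ = !d := by rw [← h₁]; exact (Bool.eq_not.2 (Ne.symm h₁₂))
      subst h₁
      exact ⟨_, left hu hv, Or.inr rfl, Or.inl rfl⟩
    · obtain rfl : d₁ = !d := Bool.eq_not.2 h₁
      obtain rfl : d = d₂ := by simpa using (Bool.eq_not.2 h₁₂)
      exact ⟨_, right hu hv, Or.inl rfl, Or.inr rfl⟩

end PairContour

/-- The machine moving two climbers along the contours of the forest `E` rooted at `q₀`. -/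
def climberMachine (hE : ∀ a, Relator.RightUnique (E a)) (q₀ : Q) :
    PortMachine A (ClimberPair Q) Unit where
  box a x y _ := PairContour E a x y
  mark := PairTurn q₀
  silent := ()
  box_symm := PairContour.symm
  box_unique h h' := ⟨h.unique (hE _) h', rfl⟩
  mark_symm := PairTurn.symm
  mark_unique := PairTurn.unique

theorem climberMachine_not_next_rev (hE : ∀ a, Relator.RightUnique (E a)) {q₀ : Q} {w : ℕ → A}
    (c : Conf (ClimberPair Q)) : ¬ (climberMachine hE q₀).Next w c (rev c) := by
  rintro ⟨l, h⟩
  rcases conf_cases c with ⟨k, x, rfl⟩ | ⟨z, rfl⟩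
  · obtain ⟨y, hbox, hy⟩ := PortMachine.step_enter_iff.1 h
    obtain ⟨-, rfl⟩ := enter_inj.1 (by simpa only [rev_rev, rev_leave] using congrArg rev hy)
    exact PairContour.irrefl _ hbox
  · obtain ⟨z', hmark, hz', -⟩ := PortMachine.step_mark_iff.1 h
    obtain rfl : z = z' := congrArg (fun c => c.1.1) hz'
    exact PairTurn.irrefl _ hmark

end Contour

/-! ### Climbing around the branches of a run -/

section Climb

variable {A Q : Type*} [LinearOrder Q] (E : A → Q → Q → Prop) (w : ℕ → A) (s : ℕ → Q)

/-- The nodes `q` of level `j` that merge with the run `s` from its side `β`, at level `I` at the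
latest. -/
inductive SideBranch (I : ℕ) (β : Bool) : ℕ → Q → Prop
  | merge {j q} : j < I → E (w j) q (s (j + 1)) → OnSide β (s j) q → SideBranch I β j q
  | step {j q q'} : j < I → E (w j) q q' → SideBranch I β (j + 1) q' → SideBranch I β j q

/-- The states at position `j` of a climber started on side `β` of the run `s`, as long as it has
not gone beyond position `I`. -/
def Valid (I : ℕ) (β : Bool) (j : ℕ) (x : Q × Bool) : Prop :=
  x = (s j, β) ∨ SideBranch E w s I β j x.1

/-- The configurations of two climbers enclosing the run `s`, up to position `I`. -/
def region (I : ℕ) : Set (Conf (ClimberPair Q)) :=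
  {c | c.2 ≤ I ∧ Valid E w s I true c.2 c.1.1.1 ∧ Valid E w s I false c.2 c.1.1.2}

variable {E w s} {I j k : ℕ} {β d : Bool} {q : Q}

namespace SideBranch

theorem lt (h : SideBranch E w s I β j q) : j < I := by
  cases h <;> assumption

theorem exists_parent (h : SideBranch E w s I β j q) : ∃ q', E (w j) q q' := by
  cases h with
  | merge _ hE _ => exact ⟨_, hE⟩
  | step _ hE _ => exact ⟨_, hE⟩

theorem ne (hE : ∀ a, Relator.RightUnique (E a)) (hs : ∀ i < I, E (w i) (s i) (s (i + 1)))
    (h : SideBranch E w s I β j q) : q ≠ s j := by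
  induction h with
  | merge _ _ hside =>
    rintro rfl
    exact not_onSide_self _ _ hside
  | step hj hq _ ih =>
    rintro rfl
    exact ih (hE _ hq (hs _ hj))

theorem disjoint (hE : ∀ a, Relator.RightUnique (E a)) (hs : ∀ i < I, E (w i) (s i) (s (i + 1)))
    (h : SideBranch E w s I β j q) : ¬ SideBranch E w s I (!β) j q := by
  induction h with
  | merge _ hq hside =>
    rintro (⟨-, -, hside'⟩ | ⟨-, hq', h'⟩)
    · exact not_onSide_self _ _ (hside.trans (onSide_not_iff.1 hside'))
    · exact h'.ne hE hs (hE _ hq' hq)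
  | step _ hq h ih =>
    rintro (⟨-, hq', -⟩ | ⟨-, hq', h'⟩)
    · exact h.ne hE hs (hE _ hq hq')
    · exact ih (hE _ hq hq' ▸ h')

end SideBranch

namespace Valid

variable {ε : Bool} {p q' : Q}

theorem merge_or_eq (hk : k < I) (hq : E (w k) q (s (k + 1))) (h : ¬ OnSide (!β) (s k) q) :
    Valid E w s I β k (q, β) := by
  rcases onSide_trichotomy β (s k) q with hside | rfl | hside
  · exact Or.inr (.merge hk hq hside)
  · exact Or.inl rfl
  · exact absurd (onSide_not_iff.2 hside) h

theorem up (hE : ∀ a, Relator.RightUnique (E a)) (hs : ∀ i < I, E (w i) (s i) (s (i + 1)))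
    (hk : k < I) (h : Outermost E (w k) ε q q') (hx : Valid E w s I β k (q, ε)) :
    Valid E w s I β (k + 1) (q', ε) := by
  rcases hx with hx | ⟨-, hq, hside⟩ | ⟨-, hq, hbranch⟩
  · obtain ⟨rfl, rfl⟩ := Prod.mk.inj hx
    exact Or.inl (by rw [hE _ h.1 (hs k hk)])
  · obtain rfl := hE _ h.1 hq
    have hεβ : ε = β := by
      by_contra hne
      rw [Bool.eq_not.2 hne] at h
      exact h.2 _ (hs k hk) (onSide_not_iff.2 hside)
    exact Or.inl (by rw [hεβ])
  · exact Or.inr (hE _ h.1 hq ▸ hbranch)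

theorem down (hs : ∀ i < I, E (w i) (s i) (s (i + 1))) (hk : k < I)
    (h : Outermost E (w k) ε q q') (hx : Valid E w s I β (k + 1) (q', ε)) :
    Valid E w s I β k (q, ε) := by
  rcases hx with hx | hbranch
  · obtain ⟨rfl, rfl⟩ := Prod.mk.inj hx
    exact merge_or_eq hk h.1 fun hside => h.2 _ (hs k hk) (onSide_not_iff.1 hside)
  · exact Or.inr (.step hk h.1 hbranch)

theorem next (hE : ∀ a, Relator.RightUnique (E a)) (hs : ∀ i < I, E (w i) (s i) (s (i + 1)))
    (hk : k < I) (h : Adjacent E (w k) ε q p q') (hx : Valid E w s I β k (q, ε)) :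
    Valid E w s I β k (p, !ε) := by
  obtain ⟨hqq', hpq', hqp, hbetween⟩ := h
  rcases hx with hx | ⟨-, hq, hside⟩ | ⟨-, hq, hbranch⟩
  · obtain ⟨rfl, rfl⟩ := Prod.mk.inj hx
    obtain rfl := hE _ hqq' (hs k hk)
    exact Or.inr (.merge hk hpq' hqp)
  · obtain rfl := hE _ hqq' hq
    by_cases hεβ : ε = β
    · subst hεβ
      exact Or.inr (.merge hk hpq' (hside.trans hqp))
    · obtain rfl := Bool.eq_not.2 hεβ
      rw [Bool.not_not]
      exact merge_or_eq hk hpq' (hbetween _ (hs k hk) (onSide_not_iff.2 hside))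
  · obtain rfl := hE _ hqq' hq
    exact Or.inr (.step hk hpq' hbranch)

theorem leaf (hs : ∀ i < I, E (w i) (s i) (s (i + 1))) (hk : k < I)
    (h : ∀ p, ¬ E (w k) p q) (hx : Valid E w s I β (k + 1) (q, ε)) :
    Valid E w s I β (k + 1) (q, !ε) := by
  rcases hx with hx | hbranch
  · obtain ⟨rfl, rfl⟩ := Prod.mk.inj hx
    exact absurd (hs k hk) (h _)
  · exact Or.inr hbranch

theorem contour (hE : ∀ a, Relator.RightUnique (E a)) (hs : ∀ i < I, E (w i) (s i) (s (i + 1)))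
    (hk : k < I) {x y : (Q × Bool) × Bool} (h : Contour E (w k) x y)
    (hx : Valid E w s I β (boundary k x.2) x.1) : Valid E w s I β (boundary k y.2) y.1 := by
  cases h with
  | up h => exact hx.up hE hs hk h
  | down h => exact hx.down hs hk h
  | next h => exact hx.next hE hs hk h
  | leaf h => exact hx.leaf hs hk h

theorem exists_contour [Finite Q] (hE : ∀ a, Relator.RightUnique (E a))
    (hs : ∀ i < I, E (w i) (s i) (s (i + 1))) (hk : k < I) {x : (Q × Bool) × Bool}
    (hx : Valid E w s I β (boundary k x.2) x.1) :
    ∃ y, Contour E (w k) x y ∧ Valid E w s I β (boundary k y.2) y.1 := by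
  suffices ∃ y, Contour E (w k) x y from
    this.imp fun _ hy => ⟨hy, hx.contour hE hs hk hy⟩
  obtain ⟨⟨q, ε⟩, _ | _⟩ := x
  · exact Contour.exists_of_right E (w k) q ε
  · obtain ⟨q', hq'⟩ : ∃ q', E (w k) q q' := by
      rcases hx with hx | hbranch
      · exact ⟨_, (Prod.mk.inj hx).1 ▸ hs k hk⟩
      · exact hbranch.exists_parent
    exact Contour.exists_of_left hq' ε

theorem turn (hE : ∀ a, Relator.RightUnique (E a)) (hs : ∀ i < I, E (w i) (s i) (s (i + 1)))
    {x : Q × Bool} (hx : Valid E w s I β 0 x) : Valid E w s I β 0 (turn (s 0) x) := by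
  rcases hx with rfl | hbranch
  · exact Or.inl (turn_of_eq rfl)
  · rw [turn_of_ne (hbranch.ne hE hs)]
    exact Or.inr hbranch

theorem eq_of_fst_eq (hE : ∀ a, Relator.RightUnique (E a))
    (hs : ∀ i < I, E (w i) (s i) (s (i + 1))) {x : Q × Bool} (hx : Valid E w s I β j x)
    (h : x.1 = s j) : x = (s j, β) :=
  hx.resolve_right fun hbranch => hbranch.ne hE hs h

end Valid

variable (s) in
/-- The configuration in which both climbers are about to leave the run `s` at position `i`. -/
def sync (i : ℕ) : Conf (ClimberPair Q) := enter i (syncPort (s i))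

theorem eq_of_syncState_mem_region (hE : ∀ a, Relator.RightUnique (E a))
    (hs : ∀ i < I, E (w i) (s i) (s (i + 1))) (h : ((syncState q, d), j) ∈ region E w s I) :
    q = s j := by
  obtain ⟨-, hx | hx, hy | hy⟩ := h
  · exact congrArg Prod.fst hx
  · exact congrArg Prod.fst hx
  · exact congrArg Prod.fst hy
  · exact absurd hy (hx.disjoint hE hs)

theorem sync_mem_region (E : A → Q → Q → Prop) (w : ℕ → A) (s : ℕ → Q) (h : j ≤ I) :
    sync s j ∈ region E w s I :=
  ⟨h, Or.inl rfl, Or.inl rfl⟩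

theorem finite_region [Finite Q] (E : A → Q → Q → Prop) (w : ℕ → A) (s : ℕ → Q) (I : ℕ) :
    (region E w s I).Finite :=
  (Set.finite_univ.prod (Set.finite_Iic I)).subset fun _ hc => ⟨Set.mem_univ _, hc.1⟩

theorem exists_eq_enter_of_mem_region {x : ClimberPair Q × Bool}
    (hc : (x, j) ∈ region E w s I) (hI : (x, j) ≠ sync s I) (h0 : ¬ (x.2 = false ∧ j = 0)) :
    ∃ k < I, (x, j) = enter k x := by
  obtain ⟨⟨x, y⟩, _ | _⟩ := x
  · obtain ⟨k, rfl⟩ := Nat.exists_eq_succ_of_ne_zero fun hj => h0 ⟨rfl, hj⟩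
    exact ⟨k, hc.1, rfl⟩
  · obtain ⟨hj, hx, hy⟩ := hc
    refine ⟨j, lt_of_le_of_ne hj ?_, rfl⟩
    rintro rfl
    have hx' : x = (s j, true) := hx.resolve_right fun h => h.lt.false
    have hy' : y = (s j, false) := hy.resolve_right fun h => h.lt.false
    exact hI (by rw [hx', hy']; rfl)

theorem exists_next_of_mem_region [Finite Q] (hE : ∀ a, Relator.RightUnique (E a))
    (hs : ∀ i < I, E (w i) (s i) (s (i + 1))) {c : Conf (ClimberPair Q)}
    (hc : c ∈ region E w s I) (hI : c ≠ sync s I) (h0 : c ≠ rev (sync s 0)) :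
    ∃ c' ∈ region E w s I, (climberMachine hE (s 0)).Next w c c' := by
  obtain ⟨⟨z, d⟩, j⟩ := c
  by_cases hmark : d = false ∧ j = 0
  · obtain ⟨rfl, rfl⟩ := hmark
    obtain ⟨-, hx, hy⟩ := hc
    refine ⟨(((turn (s 0) z.1, turn (s 0) z.2), true), 0),
      ⟨Nat.zero_le I, hx.turn hE hs, hy.turn hE hs⟩, (), .mark ⟨rfl, ?_⟩⟩
    rintro ⟨hz₁, hz₂⟩
    have hz : z = syncState (s 0) :=
      Prod.ext (hx.eq_of_fst_eq hE hs hz₁) (hy.eq_of_fst_eq hE hs hz₂)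
    exact h0 (by rw [hz]; rfl)
  · obtain ⟨k, hk, hkj⟩ := exists_eq_enter_of_mem_region hc hI hmark
    rw [hkj] at hc ⊢
    obtain ⟨u, hu, hVu⟩ := Valid.exists_contour (x := (z.1, d)) hE hs hk hc.2.1
    obtain ⟨v, hv, hVv⟩ := Valid.exists_contour (x := (z.2, d)) hE hs hk hc.2.2
    obtain ⟨y, hy, hyu, hyv⟩ := PairContour.exists_of_contour hu hv
    refine ⟨leave k y, ⟨(boundary_le k y.2).trans hk, ?_, ?_⟩, (), .letter hy⟩
    · rcases hyu with hyu | rfl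
      · obtain ⟨hy₁, hy₂⟩ := Prod.mk.inj hyu
        change Valid E w s I true (boundary k y.2) y.1.1
        rw [hy₁, hy₂]
        exact hc.2.1
      · exact hVu
    · rcases hyv with hyv | rfl
      · obtain ⟨hy₁, hy₂⟩ := Prod.mk.inj hyv
        change Valid E w s I false (boundary k y.2) y.1.2
        rw [hy₁, hy₂]
        exact hc.2.2
      · exact hVv

section SyncTime

variable (hE : ∀ a, Relator.RightUnique (E a))

/-- `SilentStep hE q₀ w c c'` is a step of the climbers that neither starts from a synchronized
configuration nor ends in the reversal of one. -/
def SilentStep (q₀ : Q) (w : ℕ → A) (c c' : Conf (ClimberPair Q)) : Prop :=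
  (climberMachine hE q₀).Next w c c' ∧ c.1 ∉ Set.range syncPort ∧
    (rev c').1 ∉ Set.range syncPort

theorem SilentStep.rev {hE : ∀ a, Relator.RightUnique (E a)} {q₀ : Q}
    {c c' : Conf (ClimberPair Q)} (h : SilentStep hE q₀ w c c') :
    SilentStep hE q₀ w (rev c') (rev c) :=
  ⟨h.1.rev, h.2.2, by rw [rev_rev]; exact h.2.1⟩

theorem not_next_sync_zero (w : ℕ → A) (c : Conf (ClimberPair Q)) :
    ¬ (climberMachine hE (s 0)).Next w c (sync s 0) :=
  PortMachine.not_next_start PairTurn.not_syncState c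

theorem not_reachesIn_rev {q₀ : Q} {c₀ c : Conf (ClimberPair Q)} {n m : ℕ}
    (h : ReachesIn ((climberMachine hE q₀).Next w) c₀ n c) :
    ¬ ReachesIn ((climberMachine hE q₀).Next w) c₀ m (rev c) :=
  h.not_reversal (PortMachine.next_rightUnique _ w) rev_rev PortMachine.Next.rev rev_ne
    (climberMachine_not_next_rev hE)

variable (w s)

/-- `n` is a time at which the climbers, started at `sync s 0`, arrive at `sync s J`, having so far
enclosed the run `s`. -/
def IsSyncTime (J n : ℕ) : Prop :=
  ReachesIn ((climberMachine hE (s 0)).Next w) (sync s 0) n (sync s J) ∧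
    ∀ k < n, ∃ c ∈ region E w s J, ReachesIn ((climberMachine hE (s 0)).Next w) (sync s 0) k c

variable {w s}

theorem exists_isSyncTime [Finite Q] (hs : ∀ i < I, E (w i) (s i) (s (i + 1))) :
    ∃ n, IsSyncTime w s hE I n := by
  refine ReachesIn.exists_of_finite (PortMachine.next_leftUnique _ w) (not_next_sync_zero hE w)
    (finite_region E w s I) (sync_mem_region E w s I.zero_le) fun {n c} hn hc hI => ?_
  refine exists_next_of_mem_region hE hs hc hI ?_
  rintro rfl
  exact not_reachesIn_rev hE .zero hn

namespace IsSyncTime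

variable {hE} {J J' n n' : ℕ}

theorem mem_region (h : IsSyncTime w s hE I n) (hk : k ≤ n) {c : Conf (ClimberPair Q)}
    (hc : ReachesIn ((climberMachine hE (s 0)).Next w) (sync s 0) k c) : c ∈ region E w s I := by
  rcases hk.lt_or_eq with hk | rfl
  · obtain ⟨c', hc', hk'⟩ := h.2 k hk
    rwa [hc.unique (PortMachine.next_rightUnique _ w) hk']
  · rw [hc.unique (PortMachine.next_rightUnique _ w) h.1]
    exact sync_mem_region E w s le_rfl

theorem le (h : IsSyncTime w s hE J n) (h' : IsSyncTime w s hE J' n') (hJ : J ≤ J') :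
    n ≤ n' := by
  rcases hJ.lt_or_eq with hJ | rfl
  · by_contra! hn
    exact hJ.not_ge (h.mem_region hn.le h'.1).1
  · exact (h.1.time_unique (PortMachine.next_leftUnique _ w) (not_next_sync_zero hE w) h'.1).le

theorem lt (h : IsSyncTime w s hE J n) (h' : IsSyncTime w s hE J' n') (hJ : J < J') :
    n < n' := by
  refine lt_of_le_of_ne (h.le h' hJ.le) ?_
  rintro rfl
  have heq := h.1.unique (PortMachine.next_rightUnique _ w) h'.1
  exact hJ.ne (congrArg Prod.snd heq)

theorem exists_of_mem_region [Finite Q] (hs : ∀ i < I, E (w i) (s i) (s (i + 1)))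
    {c : Conf (ClimberPair Q)} (hc : c ∈ region E w s I) (hsync : c.1 ∈ Set.range syncPort) :
    ∃ J ≤ I, c = sync s J ∧ ∃ n, IsSyncTime w s hE J n := by
  obtain ⟨x, j⟩ := c
  obtain ⟨q, rfl⟩ := hsync
  obtain rfl := eq_of_syncState_mem_region hE hs hc
  exact ⟨j, hc.1, rfl, exists_isSyncTime hE fun i hi => hs i (hi.trans_le hc.1)⟩

theorem silentStep [Finite Q] (hs : ∀ i < I + 1, E (w i) (s i) (s (i + 1)))
    (h : IsSyncTime w s hE I n) (h' : IsSyncTime w s hE (I + 1) n') (hnk : n < k) (hkn' : k < n')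
    {c c' : Conf (ClimberPair Q)}
    (hc : ReachesIn ((climberMachine hE (s 0)).Next w) (sync s 0) k c)
    (hcc' : (climberMachine hE (s 0)).Next w c c') : SilentStep hE (s 0) w c c' := by
  refine ⟨hcc', fun hsync => ?_, fun hsync => ?_⟩
  · have hmem : c ∈ region E w s (I + 1) := h'.mem_region hkn'.le hc
    obtain ⟨J, hJ, rfl, m, hm⟩ := exists_of_mem_region (hE := hE) hs hmem hsync
    obtain rfl := hc.time_unique (PortMachine.next_leftUnique _ w) (not_next_sync_zero hE w) hm.1
    rcases hJ.lt_or_eq with hJ | rfl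
    · exact hnk.not_ge (hm.le h (Nat.lt_succ_iff.1 hJ))
    · exact hkn'.not_ge (h'.le hm le_rfl)
  · have hc' := hc.succ hcc'
    have hmem : c' ∈ region E w s (I + 1) := h'.mem_region hkn' hc'
    obtain ⟨J, -, hJ, m, hm⟩ := exists_of_mem_region (c := rev c') (hE := hE) hs hmem hsync
    exact not_reachesIn_rev hE hc' (hJ ▸ hm.1)

end IsSyncTime

theorem exists_silent_path [Finite Q] (hs : ∀ i < I + 1, E (w i) (s i) (s (i + 1))) :
    ∃ u, PairContour E (w I) (syncPort (s I)) u ∧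
      Relation.ReflTransGen (SilentStep hE (s 0) w) (leave I u) (sync s (I + 1)) := by
  obtain ⟨n, hn⟩ := exists_isSyncTime hE fun i hi => hs i (Nat.lt_succ_of_lt hi)
  obtain ⟨n', hn'⟩ := exists_isSyncTime hE hs
  have hlt : n < n' := hn.lt hn' I.lt_succ_self
  obtain ⟨c, hc⟩ := hn'.1.exists_of_le hlt
  obtain ⟨d, hd, hdc⟩ := ReachesIn.succ_iff.1 hc
  obtain ⟨l, hstep⟩ := hd.unique (PortMachine.next_rightUnique _ w) hn.1 ▸ hdc
  obtain ⟨u, hu, rfl⟩ := PortMachine.step_enter_iff.1 hstep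
  refine ⟨u, hu, ReachesIn.reflTransGen_of_le (PortMachine.next_rightUnique _ w) ?_ hc hn'.1 hlt⟩
  intro k c c' hk hkn' hkc _ hcc'
  exact hn.silentStep hs hn' hk hkn' hkc hcc'

end SyncTime

end Climb

/-! ### Register updates -/

section Register

variable {R B : Type}

/-- The letters of a word over registers and letters that precede its first register, and the
register port that follows them. A register port `((r, e), d)` stands for the beginning
(`e = false`) or the end (`e = true`) of the content of `r`, before (`d = true`) or after
(`d = false`) the update; the word is understood to be the content of `r₀` after the update, from
some place on. -/
def nextPort (r₀ : R) : List (R ⊕ B) → List B × ((R × Bool) × Bool)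
  | [] => ([], ((r₀, true), false))
  | Sum.inl r :: _ => ([], ((r, false), true))
  | Sum.inr b :: l => (b :: (nextPort r₀ l).1, (nextPort r₀ l).2)

theorem nextPort_orientation (r₀ : R) (l : List (R ⊕ B)) :
    (nextPort r₀ l).2.1.2 = !(nextPort r₀ l).2.2 := by
  induction l with
  | nil => rfl
  | cons x l ih => cases x with
    | inl r => rfl
    | inr b => exact ih

theorem nextPort_map_inr (r₀ : R) (b : List B) :
    nextPort r₀ (b.map Sum.inr) = (b, ((r₀, true), false)) := by
  induction b with
  | nil => rfl
  | cons x b ih => simp only [List.map_cons, nextPort, ih]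

theorem nextPort_map_inr_append (r₀ r : R) (b : List B) (l : List (R ⊕ B)) :
    nextPort r₀ (b.map Sum.inr ++ Sum.inl r :: l) = (b, ((r, false), true)) := by
  induction b with
  | nil => rfl
  | cons x b ih => simp only [List.map_cons, List.cons_append, nextPort, ih]

theorem eq_map_inr_or_append (l : List (R ⊕ B)) : (∃ b : List B, l = b.map Sum.inr) ∨
    ∃ (b : List B) (r : R) (l' : List (R ⊕ B)), l = b.map Sum.inr ++ Sum.inl r :: l' := by
  induction l with
  | nil => exact Or.inl ⟨[], rfl⟩
  | cons x l ih =>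
    rcases x with r | y
    · exact Or.inr ⟨[], r, l, rfl⟩
    · rcases ih with ⟨b, rfl⟩ | ⟨b, r, l', rfl⟩
      · exact Or.inl ⟨y :: b, rfl⟩
      · exact Or.inr ⟨y :: b, r, l', rfl⟩

/-- `RegGap σ x y b`: in the contents produced by the update `σ`, the word `b` separates the
register port `x` from the next register port `y`. -/
inductive RegGap (σ : R → List (R ⊕ B)) : (R × Bool) × Bool → (R × Bool) × Bool → List B → Prop
  | start (r₀) : RegGap σ ((r₀, false), false) (nextPort r₀ (σ r₀)).2 (nextPort r₀ (σ r₀)).1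
  | after {r₀ r α β} : σ r₀ = α ++ Sum.inl r :: β →
      RegGap σ ((r, true), true) (nextPort r₀ β).2 (nextPort r₀ β).1

/-- The matching of register ports given by the gaps of an update. -/
def RegMatch (σ : R → List (R ⊕ B)) (x y : (R × Bool) × Bool) (b : List B) : Prop :=
  RegGap σ x y b ∨ RegGap σ y x b

theorem RegMatch.symm {σ : R → List (R ⊕ B)} {x y : (R × Bool) × Bool} {b : List B}
    (h : RegMatch σ x y b) : RegMatch σ y x b :=
  Or.symm h

end Register

section CopylessUpdate

theorem occ_append {C : Type} (a : C) (l l' : List C) : occ a (l ++ l') = occ a l + occ a l' :=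
  List.countP_append

theorem occ_cons_self {C : Type} (a : C) (l : List C) : occ a (a :: l) = occ a l + 1 := by
  simp [occ]

theorem notMem_of_occ_eq_zero {C : Type} {a : C} {l : List C} (h : occ a l = 0) : a ∉ l := by
  intro ha
  simpa using List.countP_eq_zero.1 h a ha

variable {R B : Type} [Fintype R] {σ : R → List (R ⊕ B)}

theorem Copyless.eq_of_eq_append (hσ : Copyless σ) {r r₀ r₁ : R} {α β α' β' : List (R ⊕ B)}
    (h₀ : σ r₀ = α ++ Sum.inl r :: β) (h₁ : σ r₁ = α' ++ Sum.inl r :: β') :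
    r₀ = r₁ ∧ α = α' ∧ β = β' := by
  classical
  have hr := hσ r
  have hr₀ : r₀ = r₁ := by
    by_contra hne
    have hpair := (Finset.sum_le_sum_of_subset (Finset.subset_univ {r₀, r₁})).trans hr
    rw [Finset.sum_pair hne, h₀, h₁] at hpair
    simp only [occ_append, occ_cons_self] at hpair
    omega
  subst hr₀
  have hocc := (Finset.single_le_sum (fun _ _ => Nat.zero_le _) (Finset.mem_univ r₀)).trans hr
  have hocc' := hocc
  rw [h₀, occ_append, occ_cons_self] at hocc
  rw [h₁, occ_append, occ_cons_self] at hocc'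
  have heq := h₀.symm.trans h₁
  rw [List.append_cons_inj_of_notMem (notMem_of_occ_eq_zero (by omega))
    (notMem_of_occ_eq_zero (by omega))] at heq
  exact ⟨rfl, heq.1, heq.2.2⟩

theorem Copyless.reverse (hσ : Copyless σ) : Copyless fun r => (σ r).reverse := by
  intro r
  simpa only [occ, List.countP_reverse] using hσ r

end CopylessUpdate

namespace RegGap

variable {R B : Type} {σ : R → List (R ⊕ B)} {x y y' : (R × Bool) × Bool} {r r' r₀ : R}
  {b b' : List B} {α β : List (R ⊕ B)}

theorem whole (h : σ r₀ = b.map Sum.inr) : RegGap σ ((r₀, false), false) ((r₀, true), false) b := by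
  have hgap := start (σ := σ) r₀
  rwa [h, nextPort_map_inr] at hgap

theorem first (h : σ r₀ = b.map Sum.inr ++ Sum.inl r :: β) :
    RegGap σ ((r₀, false), false) ((r, false), true) b := by
  have hgap := start (σ := σ) r₀
  rwa [h, nextPort_map_inr_append] at hgap

theorem last (h : σ r₀ = α ++ Sum.inl r :: b.map Sum.inr) :
    RegGap σ ((r, true), true) ((r₀, true), false) b := by
  simpa only [nextPort_map_inr] using after h

theorem between (h : σ r₀ = α ++ Sum.inl r :: (b.map Sum.inr ++ Sum.inl r' :: β)) :
    RegGap σ ((r, true), true) ((r', false), true) b := by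
  simpa only [nextPort_map_inr_append] using after h

/-- This duality reduces the uniqueness of the previous gap to that of the next one. -/
theorem reverse (h : RegGap σ x y b) : RegGap (fun r => (σ r).reverse)
    ((y.1.1, !y.1.2), y.2) ((x.1.1, !x.1.2), x.2) b.reverse := by
  cases h with
  | start r₀ =>
    rcases eq_map_inr_or_append (σ r₀) with ⟨b, hb⟩ | ⟨b, r, β, hb⟩
    · rw [hb, nextPort_map_inr]
      exact whole (by simp [hb])
    · rw [hb, nextPort_map_inr_append]
      exact last (r₀ := r₀) (α := β.reverse) (by simp [hb])
  | @after r₀ r α β h =>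
    rcases eq_map_inr_or_append β with ⟨b, rfl⟩ | ⟨b, r', β, rfl⟩
    · rw [nextPort_map_inr]
      exact first (β := α.reverse) (by simp [h])
    · rw [nextPort_map_inr_append]
      exact between (r₀ := r₀) (α := β.reverse) (β := α.reverse) (by simp [h])

theorem orientation (h : RegGap σ x y b) : x.1.2 = x.2 ∧ y.1.2 = !y.2 := by
  cases h <;> exact ⟨rfl, nextPort_orientation _ _⟩

theorem unique [Fintype R] (hσ : Copyless σ) (h : RegGap σ x y b) (h' : RegGap σ x y' b') :
    y = y' ∧ b = b' := by
  cases h with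
  | start r₀ =>
    cases h'
    exact ⟨rfl, rfl⟩
  | after h =>
    cases h' with
    | after h' =>
      obtain ⟨rfl, -, rfl⟩ := hσ.eq_of_eq_append h h'
      exact ⟨rfl, rfl⟩

theorem counique [Fintype R] (hσ : Copyless σ) {x' : (R × Bool) × Bool} (h : RegGap σ x y b)
    (h' : RegGap σ x' y b') : x = x' ∧ b = b' := by
  obtain ⟨hx, hb⟩ := h.reverse.unique hσ.reverse h'.reverse
  refine ⟨?_, List.reverse_injective hb⟩
  simpa [Prod.ext_iff] using hx

end RegGap

theorem RegMatch.unique {R B : Type} [Fintype R] {σ : R → List (R ⊕ B)} (hσ : Copyless σ)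
    {x y y' : (R × Bool) × Bool} {b b' : List B} (h₁ : RegMatch σ x y b) (h₂ : RegMatch σ x y' b') :
    y = y' ∧ b = b' := by
  rcases h₁ with h₁ | h₁ <;> rcases h₂ with h₂ | h₂
  · exact h₁.unique hσ h₂
  · exact absurd (h₁.orientation.1.symm.trans h₂.orientation.2) (by simp)
  · exact absurd (h₂.orientation.1.symm.trans h₁.orientation.2) (by simp)
  · exact h₁.counique hσ h₂

/-! ### The machine following a streaming string transducer -/

section Attach

variable {P V : Type*} {x x' : P × Bool} {ρ ρ' : V}

/-- The port `x` carrying the value `ρ`. -/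
def joint (x : P × Bool) (ρ : V) : (P × V) × Bool := ((x.1, ρ), x.2)

/-- The configuration `c` carrying the value `ρ`. -/
def attach (c : Conf P) (ρ : V) : Conf (P × V) := (joint c.1 ρ, c.2)

theorem joint_inj : joint x ρ = joint x' ρ' ↔ x = x' ∧ ρ = ρ' := by
  simp only [joint, Prod.ext_iff]
  tauto

end Attach

variable {A B : Type} (T : CPSST A B)

/-- The transition relation of `T`, letter by letter. -/
def CPSST.Edge (a : A) (p q : T.Q) : Prop := (p, a, q) ∈ T.Δ

/-- What a step of the machine following `T` contributes: a piece of output, and the transition of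
`T` it crosses, if any. -/
abbrev CPSST.Label := List B × Option (T.Q × A × T.Q)

/-- A pair of climbers together with an end of the content of a register. -/
abbrev CPSST.Track := ClimberPair T.Q × (T.R × Bool)

variable {T}

theorem OnewayDet.rightUnique_edge (hT : OnewayDet T.toOnewayAut) (a : A) :
    Relator.RightUnique (T.Edge a) :=
  fun p q q' => hT p a q q'

theorem CPSST.eq_outReg_of_upd_eq {t : T.Q × A × T.Q} {r : T.R} {α β : List (T.R ⊕ B)}
    (h : T.upd t r = α ++ Sum.inl T.outReg :: β) : r = T.outReg ∧ α = [] := by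
  obtain ⟨γ, hγ⟩ := T.out_form t
  obtain ⟨hr, hα, -⟩ := (T.copyless t).eq_of_eq_append h (α' := []) hγ
  exact ⟨hr, hα⟩

section Box

variable [LinearOrder T.Q]

variable (T) in
/-- The two ports of the climbers between which the synchronized climbers at the state `p` cross the
letter `a`: the synchronized one on the left, and the one they reach next. -/
inductive EdgeEnd (a : A) (p : T.Q) : Bool → ClimberPair T.Q × Bool → Prop
  | sync : EdgeEnd a p true (syncPort p)
  | partner {u} : PairContour T.Edge a (syncPort p) u → EdgeEnd a p false u

variable (T) in
/-- The letter boxes: away from synchronizations the climbers move silently, and at a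
synchronization the machine crosses the transition of `T` according to its register update. -/
inductive Box (a : A) : T.Track × Bool → T.Track × Bool → T.Label → Prop
  | silent {u u' ρ} : PairContour T.Edge a u u' → u ∉ Set.range syncPort →
      u' ∉ Set.range syncPort → Box a (joint u ρ) (joint u' ρ) ([], none)
  | cross {p q d u d' u' ρ ρ' b} : T.Edge a p q → EdgeEnd T a p d u → EdgeEnd T a p d' u' →
      RegMatch (T.upd (p, a, q)) (ρ, d) (ρ', d') b →
      Box a (joint u ρ) (joint u' ρ') (b, some (p, a, q))

variable (T) in
/-- The end-marker box: at the initial state, the empty content of a register is read by turning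
back. -/
inductive MarkBox : T.Track → T.Track → Prop
  | turn {z z' ρ} : PairTurn T.init z z' → MarkBox (z, ρ) (z', ρ)
  | read {r e} : r ≠ T.outReg →
      MarkBox (syncState T.init, (r, e)) (syncState T.init, (r, !e))

variable {a : A}

namespace EdgeEnd

variable {p p' : T.Q} {d d' : Bool} {u u' : ClimberPair T.Q × Bool}

theorem unique (hE : Relator.RightUnique (T.Edge a)) (h : EdgeEnd T a p d u)
    (h' : EdgeEnd T a p d u') : u = u' := by
  cases h with
  | sync => cases h'; rfl
  | partner h => cases h' with
    | partner h' => exact h.unique hE h'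

theorem eq_of_port_eq (hE : Relator.RightUnique (T.Edge a)) (h : EdgeEnd T a p d u)
    (h' : EdgeEnd T a p' d' u) : p = p' ∧ d = d' := by
  rcases h with _ | h
  · generalize hu : syncPort p = u at h'
    rcases h' with _ | h'
    · exact ⟨syncPort_injective hu, rfl⟩
    · exact absurd (hu ▸ h') (PairContour.not_syncPort _ _)
  · rcases h' with _ | h'
    · exact absurd h (PairContour.not_syncPort _ _)
    · exact ⟨syncPort_injective (h.symm.unique hE h'.symm), rfl⟩

theorem not_silent (hE : Relator.RightUnique (T.Edge a)) (h : EdgeEnd T a p d u)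
    (hu : PairContour T.Edge a u u') (hus : u ∉ Set.range syncPort)
    (hus' : u' ∉ Set.range syncPort) : False := by
  rcases h with _ | h
  · exact hus ⟨p, rfl⟩
  · exact hus' ⟨p, h.symm.unique hE hu⟩

end EdgeEnd

namespace Box

variable {x y y' : T.Track × Bool} {l l' : T.Label}

theorem symm (h : Box T a x y l) : Box T a y x l := by
  cases h with
  | silent h hu hu' => exact silent h.symm hu' hu
  | cross hq h h' hb => exact cross hq h' h hb.symm

theorem unique (hE : Relator.RightUnique (T.Edge a)) (h : Box T a x y l)
    (h' : Box T a x y' l') : y = y' ∧ l = l' := by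
  rcases h with @⟨u, u', ρ, h, hu, hu'⟩ | @⟨p, q, d, u, d', u', ρ, ρ', b, hq, h₁, h₂, hb⟩ <;>
    generalize hx : joint u ρ = x at h' <;>
    rcases h' with @⟨v, v', _, g, hv, hv'⟩ |
      @⟨p₂, q₂, d₂, v, d₂', v', _, ρ₂', b₂, gq, g₁, g₂, gb⟩ <;>
    obtain ⟨rfl, rfl⟩ := joint_inj.1 hx
  · rw [h.unique hE g]
    exact ⟨rfl, rfl⟩
  · exact (g₁.not_silent hE h hu hu').elim
  · exact (h₁.not_silent hE g hv hv').elim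
  · obtain ⟨rfl, rfl⟩ := h₁.eq_of_port_eq hE g₁
    obtain rfl := hE hq gq
    obtain ⟨hρ, rfl⟩ := hb.unique (T.copyless _) gb
    obtain ⟨rfl, rfl⟩ := Prod.mk.inj hρ
    rw [h₂.unique hE g₂]
    exact ⟨rfl, rfl⟩

end Box

namespace MarkBox

variable {x y y' : T.Track}

theorem symm (h : MarkBox T x y) : MarkBox T y x := by
  cases h with
  | turn h => exact turn h.symm
  | @read r e hr => simpa only [Bool.not_not] using read (e := !e) hr

theorem unique (h : MarkBox T x y) (h' : MarkBox T x y') : y = y' := by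
  cases h with
  | turn h => cases h' with
    | turn h' => rw [h.unique h']
    | read _ => exact absurd h (PairTurn.not_syncState _)
  | read _ => cases h' with
    | turn h' => exact absurd h' (PairTurn.not_syncState _)
    | read _ => rfl

end MarkBox

/-- The machine that walks along the output of `T`, using a pair of climbers to find its way in the
run of `T`. -/
def trackMachine (hT : OnewayDet T.toOnewayAut) : PortMachine A T.Track T.Label where
  box := Box T
  mark := MarkBox T
  silent := ([], none)
  box_symm := Box.symm
  box_unique := Box.unique (hT.rightUnique_edge _)
  mark_symm := MarkBox.symm
  mark_unique := MarkBox.unique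

theorem trackMachine_exists_edge (hT : OnewayDet T.toOnewayAut) {w : ℕ → A} {i : ℕ} {p : T.Q}
    {ρ : T.R × Bool} {c : Conf T.Track} {l : T.Label}
    (h : (trackMachine hT).Step w (attach (enter i (syncPort p)) ρ) c l) :
    ∃ q, T.Edge (w i) p q ∧ l.2 = some (p, w i, q) := by
  obtain ⟨y, hbox, -⟩ := PortMachine.step_enter_iff.1
    (show (trackMachine hT).Step w (enter i (joint (syncPort p) ρ)) c l from h)
  generalize hx : joint (syncPort p) ρ = x at hbox
  rcases hbox with @⟨u, u', ρ', -, hu, -⟩ | @⟨p', q, d, u, d', u', ρ', ρ'', b, hq, h, -, -⟩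
  · obtain ⟨rfl, -⟩ := joint_inj.1 hx
    exact absurd ⟨p, rfl⟩ hu
  · obtain ⟨rfl, -⟩ := joint_inj.1 hx
    obtain ⟨rfl, -⟩ := h.eq_of_port_eq (hT.rightUnique_edge _) .sync
    exact ⟨q, hq, rfl⟩

end Box

/-! ### Reading registers along a run -/

section TrackPath

variable {A B : Type} {T : CPSST A B} [LinearOrder T.Q]

variable (T) in
/-- The labels of the run `s` of `T` on `w`, as they may occur at a configuration `c`. -/
def CPSST.OnRun (w : ℕ → A) (s : ℕ → T.Q) (c : Conf T.Track) (l : T.Label) : Prop :=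
  ∀ t ∈ l.2, ∃ j, c.2 ≤ j + 1 ∧ t = (s j, w j, s (j + 1))

/-- A finite path of the machine with its output, crossing only transitions of the run `s`. -/
inductive TrackPath (hT : OnewayDet T.toOnewayAut) (w : ℕ → A) (s : ℕ → T.Q) :
    Conf T.Track → Conf T.Track → List B → Prop
  | refl {c} : TrackPath hT w s c c []
  | tail {c c' c'' b l} : TrackPath hT w s c c' b → (trackMachine hT).Step w c' c'' l →
      T.OnRun w s c' l → TrackPath hT w s c c'' (b ++ l.1)

variable {hT : OnewayDet T.toOnewayAut} {w : ℕ → A} {s : ℕ → T.Q} {i : ℕ} {ρ : T.R × Bool}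

namespace TrackPath

variable {c c' c'' : Conf T.Track} {b b' : List B}

theorem trans (h : TrackPath hT w s c c' b) (h' : TrackPath hT w s c' c'' b') :
    TrackPath hT w s c c'' (b ++ b') := by
  induction h' with
  | refl => rwa [List.append_nil]
  | tail _ hstep hl ih =>
    rw [← List.append_assoc]
    exact ih.tail hstep hl

theorem single {l : T.Label} (h : (trackMachine hT).Step w c c' l) (hl : T.OnRun w s c l) :
    TrackPath hT w s c c' l.1 :=
  refl.tail h hl

theorem single_silent (h : (trackMachine hT).Step w c c' ([], none)) : TrackPath hT w s c c' [] :=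
  single h fun _ ht => absurd ht (Option.not_mem_none _)

end TrackPath

theorem SilentStep.step {c c' : Conf (ClimberPair T.Q)}
    (h : SilentStep hT.rightUnique_edge T.init w c c') (ρ : T.R × Bool) :
    (trackMachine hT).Step w (attach c ρ) (attach c' ρ) ([], none) := by
  obtain ⟨⟨l, hstep⟩, hc, hc'⟩ := h
  cases hstep with
  | letter hbox =>
    rw [rev_leave] at hc'
    exact .letter (M := trackMachine hT) (.silent hbox hc hc')
  | mark hmark => exact .mark (M := trackMachine hT) (.turn hmark)

theorem TrackPath.of_silent {c c' : Conf (ClimberPair T.Q)}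
    (h : Relation.ReflTransGen (SilentStep hT.rightUnique_edge T.init w) c c') (ρ : T.R × Bool) :
    TrackPath hT w s (attach c ρ) (attach c' ρ) [] := by
  induction h with
  | refl => exact .refl
  | tail _ hstep ih => exact ih.trans (.single_silent (hstep.step ρ))

theorem reflTransGen_silentStep_rev {c c' : Conf (ClimberPair T.Q)}
    (h : Relation.ReflTransGen (SilentStep hT.rightUnique_edge T.init w) c c') :
    Relation.ReflTransGen (SilentStep hT.rightUnique_edge T.init w) (rev c') (rev c) := by
  induction h with
  | refl => exact .refl
  | tail _ hstep ih => exact ih.head hstep.rev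

variable (s) in
/-- The configuration about to cross the letter `i` of the run `s` through the register port `x`. -/
def gate (i : ℕ) (x : (T.R × Bool) × Bool) : Conf T.Track :=
  attach (bif x.2 then sync s i else rev (sync s (i + 1))) x.1

section

variable [Finite T.Q] (h0 : s 0 = T.init)
include h0

theorem path_gate (hs : ∀ j < i + 1, T.Edge (w j) (s j) (s (j + 1))) {x y : (T.R × Bool) × Bool}
    {b : List B} (h : RegMatch (T.upd (s i, w i, s (i + 1))) x y b) :
    TrackPath hT w s (gate s i x) (rev (gate s i y)) b := by
  obtain ⟨u, hu, hpath⟩ := exists_silent_path hT.rightUnique_edge hs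
  rw [h0] at hpath
  let port (d : Bool) : ClimberPair T.Q × Bool := bif d then syncPort (s i) else u
  have hport : ∀ d, EdgeEnd T (w i) (s i) d (port d)
    | true => .sync
    | false => .partner hu
  have arrive : ∀ z : (T.R × Bool) × Bool,
      TrackPath hT w s (gate s i z) (attach (enter i (port z.2)) z.1) []
    | (ρ, true) => .refl
    | (ρ, false) => by
      have := reflTransGen_silentStep_rev (hT := hT) hpath
      rw [rev_leave] at this
      exact .of_silent this ρ
  have depart : ∀ z : (T.R × Bool) × Bool,
      TrackPath hT w s (attach (leave i (port z.2)) z.1) (rev (gate s i z)) []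
    | (ρ, true) => .refl
    | (ρ, false) => by
      change TrackPath hT w s _ (attach (rev (rev (sync s (i + 1)))) ρ) []
      rw [rev_rev]
      exact .of_silent hpath ρ
  have cross : TrackPath hT w s (attach (enter i (port x.2)) x.1)
      (attach (leave i (port y.2)) y.1) b :=
    .single (.letter (.cross (hs i i.lt_succ_self) (hport x.2) (hport y.2) h))
      fun t ht => ⟨i, boundary_le i _, (Option.mem_some_iff.1 ht).symm⟩
  simpa only [List.nil_append, List.append_nil] using ((arrive x).trans cross).trans (depart y)

/-- To read the rest `l` of an updated register, alternate between gaps of the update and registers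
of the previous position. -/
theorem exists_path_suffix (hs : ∀ j < i + 1, T.Edge (w j) (s j) (s (j + 1)))
    (hreg : ∀ r ≠ T.outReg, TrackPath hT w s (attach (rev (sync s i)) (r, false))
      (attach (sync s i) (r, true)) (regVal T w s i r))
    {r₀ : T.R} (l : List (T.R ⊕ B)) {α : List (T.R ⊕ B)} (hα : r₀ = T.outReg → α ≠ [])
    (hl : T.upd (s i, w i, s (i + 1)) r₀ = α ++ l) :
    ∃ b, TrackPath hT w s (rev (gate s i (nextPort r₀ l).2))
        (attach (sync s (i + 1)) (r₀, true)) b ∧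
      (nextPort r₀ l).1 ++ b = subApply (regVal T w s i) l := by
  induction l generalizing α with
  | nil => exact ⟨[], .refl, rfl⟩
  | cons x l ih =>
    obtain ⟨b, hb, hout⟩ := ih (α := α ++ [x]) (fun _ => by simp) (by simp [hl])
    rcases x with r | y
    · have hr : r ≠ T.outReg := by
        rintro rfl
        obtain ⟨hr₀, hα₀⟩ := CPSST.eq_outReg_of_upd_eq hl
        exact hα hr₀ hα₀
      have hgap := path_gate (hT := hT) h0 hs (Or.inl (RegGap.after hl))
      refine ⟨_, ((hreg r hr).trans hgap).trans hb, ?_⟩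
      rw [List.append_assoc, hout]
      rfl
    · exact ⟨b, hb, congrArg (y :: ·) hout⟩

theorem path_read (hs : ∀ j < i, T.Edge (w j) (s j) (s (j + 1))) {r : T.R} (hr : r ≠ T.outReg) :
    TrackPath hT w s (attach (rev (sync s i)) (r, false)) (attach (sync s i) (r, true))
      (regVal T w s i r) := by
  induction i generalizing r with
  | zero =>
    have hmark := PortMachine.Step.mark (M := trackMachine hT) (w := w) (.read (e := false) hr)
    rw [← h0] at hmark
    exact .single_silent hmark
  | succ i ih =>
    obtain ⟨b, hb, hout⟩ := exists_path_suffix (hT := hT) h0 hs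
      (fun r hr => ih (fun j hj => hs j (hj.trans i.lt_succ_self)) hr)
      (T.upd (s i, w i, s (i + 1)) r) (fun h => absurd h hr) (List.nil_append _).symm
    have hgap := path_gate (hT := hT) h0 hs (Or.inl (RegGap.start r))
    have hpath := hgap.trans hb
    rwa [hout] at hpath

theorem exists_path_sync_succ (hs : ∀ j < i + 1, T.Edge (w j) (s j) (s (j + 1))) :
    ∃ b, TrackPath hT w s (attach (sync s i) (T.outReg, true))
        (attach (sync s (i + 1)) (T.outReg, true)) b ∧
      regVal T w s (i + 1) T.outReg = regVal T w s i T.outReg ++ b := by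
  obtain ⟨γ, hγ⟩ := T.out_form (s i, w i, s (i + 1))
  obtain ⟨b, hb, hout⟩ := exists_path_suffix (hT := hT) h0 hs
    (fun r hr => path_read h0 (fun j hj => hs j (hj.trans i.lt_succ_self)) hr) γ
    (fun _ => List.cons_ne_nil _ []) hγ
  have hgap := path_gate (hT := hT) h0 hs (Or.inl (RegGap.after (α := []) hγ))
  refine ⟨_, hgap.trans hb, ?_⟩
  rw [hout]
  exact congrArg (subApply (regVal T w s i)) hγ

end

end TrackPath

/-! ### Port machines as reversible automata -/

namespace PortMachine

section Run

variable {A P L : Type*} (M : PortMachine A P L) {w : ℕ → A} {p₀ : P} {g : ℕ → Conf P} {o : ℕ → L}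

/-- An infinite run started in the forward state `p₀`, with the labels of its steps. -/
def Run (w : ℕ → A) (p₀ : P) (g : ℕ → Conf P) (o : ℕ → L) : Prop :=
  g 0 = ((p₀, true), 0) ∧ ∀ k, M.Step w (g k) (g (k + 1)) (o k)

variable {M}

theorem Run.injective (h : M.Run w p₀ g o) (hp₀ : ∀ p, ¬ M.mark p₀ p) : g.Injective := by
  have hreach := ReachesIn.of_forall_succ (f := M.Next w) fun k => ⟨_, h.2 k⟩
  have hstart : ∀ c, ¬ M.Next w c (g 0) := h.1 ▸ not_next_start hp₀
  intro n m hnm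
  exact (hreach n).time_unique (next_leftUnique M w) hstart (hnm ▸ hreach m)

theorem Run.tendsto_position [Finite P] (h : M.Run w p₀ g o) (hp₀ : ∀ p, ¬ M.mark p₀ p) :
    Filter.Tendsto (fun k => (g k).2) Filter.atTop Filter.atTop := by
  refine Filter.tendsto_atTop.2 fun N => ?_
  have hfin : {c : Conf P | c.2 < N}.Finite := by
    convert (Set.finite_univ (α := P × Bool)).prod (Set.finite_Iio N) using 1
    ext c
    simp
  have hcof := (hfin.preimage (h.injective hp₀).injOn).compl_mem_cofinite
  rw [Nat.cofinite_eq_atTop] at hcof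
  filter_upwards [hcof] with k hk
  exact not_lt.1 hk

theorem exists_run
    (h : ∀ n, ∃ m ≥ n, ∃ c, ReachesIn (M.Next w) ((p₀, true), 0) m c) : ∃ g o, M.Run w p₀ g o := by
  have hreach : ∀ n, ∃ c, ReachesIn (M.Next w) ((p₀, true), 0) n c := by
    intro n
    obtain ⟨m, hnm, c, hc⟩ := h n
    exact hc.exists_of_le hnm
  choose g hg using hreach
  have hstep : ∀ k, M.Next w (g k) (g (k + 1)) := by
    intro k
    obtain ⟨c, hc, hnext⟩ := ReachesIn.succ_iff.1 (hg (k + 1))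
    rwa [(hg k).unique (next_rightUnique M w) hc]
  choose o ho using hstep
  exact ⟨g, o, ReachesIn.zero_iff.1 (hg 0), ho⟩

end Run

section Automaton

variable {A P L : Type} (M : PortMachine A P L)

/-- `M.Fires x e y l`: a head in the state `x` reading `e` goes to the state `y` with label `l`. -/
inductive Fires : P × Bool → Option A → P × Bool → L → Prop
  | letter {a x y l} : M.box a x y l → Fires x (some a) (opp y) l
  | mark {p p'} : M.mark p p' → Fires (p, false) none (p', true) M.silent

/-- The label of a transition, with junk value on the transitions that do not fire. -/
noncomputable def label (t : (P × Bool) × Option A × (P × Bool)) : L :=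
  @Classical.epsilon L ⟨M.silent⟩ (M.Fires t.1 t.2.1 t.2.2)

/-- The two-way automaton of a port machine. -/
def toAut [Fintype P] (p₀ : P) : TwoWayAut A where
  Q := P × Bool
  finQ := inferInstance
  fwd x := x.2 = true
  init := (p₀, true)
  init_fwd := rfl
  Δ := {t | ∃ l, M.Fires t.1 t.2.1 t.2.2 l}
  marker := by
    rintro x y ⟨l, h⟩
    cases h
    exact ⟨Bool.false_ne_true, rfl⟩

variable {M}

namespace Fires

variable {x y y' : P × Bool} {e : Option A} {l l' : L}

theorem rev (h : M.Fires x e y l) : M.Fires (opp y) e (opp x) l := by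
  cases h with
  | letter h =>
    rw [opp_opp]
    exact letter (M.box_symm h)
  | mark h => exact mark (M.mark_symm h)

theorem unique (h : M.Fires x e y l) (h' : M.Fires x e y' l') : y = y' ∧ l = l' := by
  cases h with
  | letter h => cases h' with
    | letter h' =>
      obtain ⟨rfl, rfl⟩ := M.box_unique h h'
      exact ⟨rfl, rfl⟩
  | mark h => cases h' with
    | mark h' =>
      rw [M.mark_unique h h']
      exact ⟨rfl, rfl⟩

theorem label_eq (h : M.Fires x e y l) : M.label (x, e, y) = l :=
  ((@Classical.epsilon_spec L (M.Fires x e y) ⟨l, h⟩).unique h).2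

end Fires

variable [Fintype P] {p₀ : P} {w : ℕ → A} {c c' : Conf P} {l : L}

theorem toAut_reversible : Reversible (M.toAut p₀) := by
  constructor
  · rintro x e y y' ⟨l, h⟩ ⟨l', h'⟩
    exact (h.unique h').1
  · rintro x x' e y ⟨l, h⟩ ⟨l', h'⟩
    exact opp_injective (h.rev.unique h'.rev).1

theorem Step.exists_stepVia (h : M.Step w c c' l) :
    ∃ t, StepVia (M.toAut p₀) w c t c' ∧ M.label t = l := by
  cases h with
  | @letter k x y l h =>
    have hf := Fires.letter h
    refine ⟨_, ⟨⟨l, hf⟩, rfl, rfl, ?_⟩, hf.label_eq⟩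
    rcases x with ⟨x, _ | _⟩ <;> rcases y with ⟨y, _ | _⟩ <;>
      simp [toAut, enter, leave, boundary, opp]
  | mark h =>
    have hf := Fires.mark h
    exact ⟨_, ⟨⟨_, hf⟩, rfl, rfl, Or.inr (Or.inr ⟨Bool.false_ne_true, rfl, rfl, rfl⟩)⟩, hf.label_eq⟩

theorem step_of_stepVia {t : (P × Bool) × Option A × (P × Bool)}
    (h : StepVia (M.toAut p₀) w c t c') : M.Step w c c' (M.label t) := by
  obtain ⟨x, e, y⟩ := t
  obtain ⟨z, k⟩ := c
  obtain ⟨z', k'⟩ := c'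
  obtain ⟨⟨l, hf⟩, rfl, rfl, hmove⟩ := h
  rw [hf.label_eq]
  cases hf with
  | @letter a x y l h =>
    obtain ⟨j, rfl, hk, hk'⟩ : ∃ j, a = w j ∧ k = boundary j x.2 ∧ k' = boundary j y.2 := by
      refine ⟨bif x.2 then k else k - 1, ?_⟩
      rcases x with ⟨x, _ | _⟩ <;> rcases y with ⟨y, _ | _⟩ <;> grind [toAut, boundary, opp]
    rw [hk, hk']
    exact .letter h
  | mark h =>
    obtain ⟨rfl, rfl⟩ : k = 0 ∧ k' = 0 := by simpa [toAut] using hmove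
    exact .mark h

theorem run_of_isRun {cfg : ℕ → Conf P} {tr : ℕ → (P × Bool) × Option A × (P × Bool)}
    (h : IsRun (M.toAut p₀) w cfg tr) : M.Run w p₀ cfg fun k => M.label (tr k) :=
  ⟨h.1, fun k => step_of_stepVia (h.2 k)⟩

theorem Run.exists_isRun {g : ℕ → Conf P} {o : ℕ → L} (h : M.Run w p₀ g o) :
    ∃ tr, IsRun (M.toAut p₀) w g tr := by
  choose tr htr _ using fun k => (h.2 k).exists_stepVia (p₀ := p₀)
  exact ⟨tr, h.1, htr⟩

end Automaton

end PortMachine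

/-! ### Runs of the machine and runs of the transducer -/

section TrackRun

variable {A B : Type} {T : CPSST A B} {w : ℕ → A} {s : ℕ → T.Q} {i : ℕ}

variable (T) in
/-- The initial track: the climbers surround the initial state, at the start of the output. -/
def CPSST.start : T.Track := (syncState T.init, (T.outReg, true))

variable (s) in
/-- The configuration in which the output produced by the first `i` transitions of the run `s` has
been written. -/
def outSync (i : ℕ) : Conf T.Track := attach (sync s i) (T.outReg, true)

theorem outSync_zero (h0 : s 0 = T.init) : outSync s 0 = ((T.start, true), 0) := by
  rw [outSync, sync, h0]
  rfl

theorem outSync_injective : Function.Injective (outSync s : ℕ → Conf T.Track) :=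
  fun _ _ h => congrArg Prod.snd h

variable [LinearOrder T.Q] {hT : OnewayDet T.toOnewayAut}

theorem not_markBox_start (x : T.Track) : ¬ MarkBox T T.start x := by
  rintro (h | h)
  · exact PairTurn.not_syncState _ h
  · exact h rfl

theorem TrackPath.exists_reachesIn {c₀ c c' : Conf T.Track} {b : List B} {n : ℕ}
    (h : TrackPath hT w s c c' b) (hc : ReachesIn ((trackMachine hT).Next w) c₀ n c) :
    ∃ m, ReachesIn ((trackMachine hT).Next w) c₀ m c' := by
  induction h with
  | refl => exact ⟨n, hc⟩
  | tail _ hstep _ ih =>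
    obtain ⟨m, hm⟩ := ih
    exact ⟨m + 1, hm.succ ⟨_, hstep⟩⟩

theorem TrackPath.follow {p₀ : T.Track} {g : ℕ → Conf T.Track} {o : ℕ → T.Label} {c : Conf T.Track}
    {b : List B} (h : TrackPath hT w s ((p₀, true), 0) c b) (hg : (trackMachine hT).Run w p₀ g o) :
    ∃ n, g n = c ∧ prefixCat (fun k => (o k).1) n = b ∧ ∀ j < n, T.OnRun w s (g j) (o j) := by
  generalize hc₀ : (((p₀, true), 0) : Conf T.Track) = c₀ at h
  induction h with
  | refl => exact ⟨0, hg.1.trans hc₀, rfl, fun j hj => absurd hj j.not_lt_zero⟩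
  | tail _ hstep hl ih =>
    obtain ⟨n, rfl, rfl, hrun⟩ := ih
    obtain ⟨hn, ho⟩ := (hg.2 n).unique hstep
    refine ⟨n + 1, hn, congrArg (_ ++ Prod.fst ·) ho, fun j hj => ?_⟩
    rcases Nat.lt_succ_iff_lt_or_eq.1 hj with hj | rfl
    · exact hrun j hj
    · rwa [ho]

variable [Finite T.Q]

theorem exists_path_outSync (h0 : s 0 = T.init) (hs : ∀ j < i, T.Edge (w j) (s j) (s (j + 1))) :
    TrackPath hT w s ((T.start, true), 0) (outSync s i) (regVal T w s i T.outReg) := by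
  induction i with
  | zero =>
    rw [outSync_zero h0]
    exact .refl
  | succ i ih =>
    obtain ⟨b, hb, hout⟩ := exists_path_sync_succ (hT := hT) h0 hs
    rw [hout]
    exact (ih fun j hj => hs j (hj.trans i.lt_succ_self)).trans hb

theorem exists_run_of_onewayRun (hs : OnewayRun T.toOnewayAut w s) :
    ∃ g o, (trackMachine hT).Run w T.start g o := by
  have hreach := fun i => (exists_path_outSync (hT := hT) (i := i) hs.1 fun j _ => hs.2 j)
    |>.exists_reachesIn .zero
  choose κ hκ using hreach
  have hinj : κ.Injective := fun i j hij => outSync_injective <|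
    (hκ i).unique (PortMachine.next_rightUnique _ _) (hij ▸ hκ j)
  refine PortMachine.exists_run fun n => ?_
  obtain ⟨i, hi⟩ := (hinj.nat_tendsto_atTop.eventually_ge_atTop n).exists
  exact ⟨κ i, hi, _, hκ i⟩

variable {g : ℕ → Conf T.Track} {o : ℕ → T.Label}

theorem exists_onewayRun_of_run (hg : (trackMachine hT).Run w T.start g o) :
    ∃ s, OnewayRun T.toOnewayAut w s := by
  have hnext : ∀ a p, ∃ q', ∀ q, T.Edge a p q → T.Edge a p q' := by
    intro a p
    by_cases h : ∃ q, T.Edge a p q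
    · exact h.imp fun q' hq' _ _ => hq'
    · exact ⟨p, fun q hq => absurd ⟨q, hq⟩ h⟩
  choose next hnext using hnext
  let s : ℕ → T.Q := fun i => Nat.rec T.init (fun i p => next (w i) p) i
  refine ⟨s, rfl, fun i => ?_⟩
  induction i using Nat.strong_induction_on with
  | _ i ih =>
    obtain ⟨n, hn, -, -⟩ := (exists_path_outSync (hT := hT) (s := s) rfl ih).follow hg
    have hstep := hg.2 n
    rw [hn] at hstep
    obtain ⟨q, hq, -⟩ := trackMachine_exists_edge hT hstep
    exact hnext _ _ q hq

theorem exists_sync_times (hs : OnewayRun T.toOnewayAut w s)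
    (hg : (trackMachine hT).Run w T.start g o) :
    ∃ κ : ℕ → ℕ, Filter.Tendsto κ Filter.atTop Filter.atTop ∧
      (∀ i, prefixCat (fun k => (o k).1) (κ i) = regVal T w s i T.outReg) ∧
      (∀ i, (o (κ i)).2 = some (s i, w i, s (i + 1))) ∧ ∀ j, T.OnRun w s (g j) (o j) := by
  choose κ hκ hout hrun using fun i =>
    (exists_path_outSync (hT := hT) (i := i) hs.1 fun j _ => hs.2 j).follow hg
  have hinj : κ.Injective := fun i j hij => outSync_injective (by rw [← hκ i, hij, hκ j])
  have htop := hinj.nat_tendsto_atTop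
  refine ⟨κ, htop, hout, fun i => ?_, fun j => ?_⟩
  · have hstep := hg.2 (κ i)
    rw [hκ i] at hstep
    obtain ⟨q, hq, ho⟩ := trackMachine_exists_edge hT hstep
    rw [ho, hT.rightUnique_edge _ hq (hs.2 i)]
  · obtain ⟨i, hi⟩ := (htop.eventually_gt_atTop j).exists
    exact hrun i j hi

end TrackRun

/-! ### The reversible transducer -/

section Recurrence

open Filter

variable {X Y : Type}

theorem infOften_iff_frequently {x : ℕ → X} {t : X} : InfOften x t ↔ ∃ᶠ i in atTop, x i = t :=
  frequently_atTop.symm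

theorem infOften_of_frequently_later {x : ℕ → X} {t : X} {pos : ℕ → ℕ}
    (hpos : Tendsto pos atTop atTop) (h : ∃ᶠ i in atTop, ∃ j, pos i ≤ j + 1 ∧ x j = t) :
    InfOften x t := by
  intro n
  obtain ⟨i, ⟨j, hj, ht⟩, hn⟩ := (h.and_eventually (hpos.eventually_ge_atTop (n + 1))).exists
  exact ⟨j, Nat.le_of_succ_le_succ (hn.trans hj), ht⟩

theorem exists_infOften_of_letter [Finite X] {tr : ℕ → X × Y × X} {p : X × Y × X → Prop} {a : Y}
    (hp : ∀ t, p t → t.2.1 = a) (h : ∃ᶠ i in atTop, p (tr i)) : ∃ t, InfOften tr t ∧ p t := by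
  have hfin : {t | p t}.Finite := by
    refine (Set.finite_range fun e : X × X => (e.1, a, e.2)).subset fun t ht => ⟨(t.1, t.2.2), ?_⟩
    rw [← hp t ht]
  obtain ⟨t, ht, hfreq⟩ := (frequently_exists_finite hfin (p := fun t i => tr i = t)).1
    (h.mono fun i hi => ⟨tr i, hi, rfl⟩)
  exact ⟨t, infOften_iff_frequently.2 hfreq, ht⟩

theorem StepVia.exists_letter {A : Type} {M : TwoWayAut A} {w : ℕ → A} {c c' : M.Q × ℕ}
    {t : M.Q × Option A × M.Q} (h : StepVia M w c t c') (hc : 0 < c.2) :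
    ∃ j, c.2 ≤ j + 1 ∧ t.2.1 = some (w j) := by
  obtain ⟨-, -, -, ⟨-, ht, -⟩ | ⟨-, -, ht, -⟩ | ⟨-, h0, -⟩⟩ := h
  · exact ⟨c.2, Nat.le_succ _, ht⟩
  · exact ⟨c.2 - 1, Nat.le_add_of_sub_le le_rfl, ht⟩
  · exact absurd h0 hc.ne'

theorem exists_letter_of_infOften {A : Type} {M : TwoWayAut A} {w : ℕ → A} {cfg : ℕ → M.Q × ℕ}
    {tr : ℕ → M.Q × Option A × M.Q} {t : M.Q × Option A × M.Q} (hrun : IsRun M w cfg tr)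
    (hpos : Tendsto (fun k => (cfg k).2) atTop atTop) (ht : InfOften tr t) :
    ∃ a, t.2.1 = some a ∧ InfOften w a := by
  have hfreq := (infOften_iff_frequently.1 ht).and_eventually (hpos.eventually_gt_atTop 0)
  obtain ⟨i, rfl, hi⟩ := hfreq.exists
  obtain ⟨j, -, hj⟩ := (hrun.2 i).exists_letter hi
  refine ⟨w j, hj, infOften_of_frequently_later hpos (hfreq.mono fun k ⟨hk, hk0⟩ => ?_)⟩
  obtain ⟨j', hle, hj'⟩ := (hrun.2 k).exists_letter hk0
  rw [hk, hj] at hj'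
  exact ⟨j', hle, (Option.some_injective _ hj').symm⟩

end Recurrence

section Flatten

variable {C : Type} {x : ℕ → C}

theorem prefixCat_mono {f : ℕ → List C} {n m : ℕ} (h : n ≤ m) :
    prefixCat f n <+: prefixCat f m := by
  induction m, h using Nat.le_induction with
  | base => exact List.prefix_rfl
  | succ m _ ih => exact ih.trans (List.prefix_append _ _)

theorem IsPrefixOf.mono {l l' : List C} (h : l <+: l') (h' : IsPrefixOf l' x) : IsPrefixOf l x :=
  fun i hi => (h.getElem hi).trans (h' i (hi.trans_le h.length_le))

theorem flattenTo_iff_of_tendsto {f : ℕ → List C} {κ : ℕ → ℕ}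
    (hκ : Filter.Tendsto κ Filter.atTop Filter.atTop) :
    FlattenTo f x ↔ (∀ i, IsPrefixOf (prefixCat f (κ i)) x) ∧
      ∀ m, ∃ i, m ≤ (prefixCat f (κ i)).length := by
  have hle : ∀ n, ∃ i, prefixCat f n <+: prefixCat f (κ i) := fun n =>
    (hκ.eventually_ge_atTop n).exists.imp fun i => prefixCat_mono
  constructor
  · rintro ⟨hx, hlen⟩
    refine ⟨fun i => hx (κ i), fun m => ?_⟩
    obtain ⟨n, hn⟩ := hlen m
    exact (hle n).imp fun i hi => hn.trans hi.length_le
  · rintro ⟨hx, hlen⟩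
    refine ⟨fun n => ?_, fun m => (hlen m).elim fun i hi => ⟨κ i, hi⟩⟩
    obtain ⟨i, hi⟩ := hle n
    exact (hx i).mono hi

end Flatten

section Transducer

variable {A B : Type} {T : CPSST A B} [LinearOrder T.Q] (hT : OnewayDet T.toOnewayAut)

/-- The transducer of the track machine. A transition crossing one of `T` has its color; every other
transition reading a letter has the maximal color of the transitions of `T` reading that letter, so
that it never determines the minimal recurrent color. -/
noncomputable def trackTransducer : TwoWayTrans A B where
  toTwoWayAut := (trackMachine hT).toAut T.start
  CIdx := T.CIdx
  finC := inferInstance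
  color c t := ((trackMachine hT).label t).2.elim
    (t.2.1.elim 0 fun a => Finset.univ.sup fun e : T.Q × T.Q => T.color c (e.1, a, e.2)) (T.color c)
  out t := ((trackMachine hT).label t).1

theorem card_trackTransducer :
    Fintype.card (trackTransducer hT).Q = 16 * Fintype.card T.Q ^ 2 * Fintype.card T.R := by
  have : Fintype.card (trackTransducer hT).Q = Fintype.card (T.Track × Bool) := rfl
  rw [this]
  simp only [Fintype.card_prod, Fintype.card_bool]
  ring

variable {hT}

theorem letter_of_label {t : (T.Track × Bool) × Option A × (T.Track × Bool)} {u : T.Q × A × T.Q}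
    (ht : t ∈ (trackTransducer hT).Δ) (hu : ((trackMachine hT).label t).2 = some u) :
    t.2.1 = some u.2.1 := by
  obtain ⟨x, e, y⟩ := t
  obtain ⟨l, hfires⟩ := ht
  rw [hfires.label_eq] at hu
  cases hfires with
  | letter hbox => cases hbox with
    | silent => cases hu
    | cross => cases hu; rfl
  | mark => cases hu

variable {w : ℕ → A} {s : ℕ → T.Q} {cfg : ℕ → Conf T.Track}
  {tr : ℕ → (T.Track × Bool) × Option A × (T.Track × Bool)}
  (hs : OnewayRun T.toOnewayAut w s) (hrun : IsRun (trackTransducer hT).toTwoWayAut w cfg tr)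
include hs hrun

theorem exists_infOften_label {u : T.Q × A × T.Q}
    (hu : InfOften (fun i => (s i, w i, s (i + 1))) u) :
    ∃ t, InfOften tr t ∧ ((trackMachine hT).label t).2 = some u := by
  obtain ⟨κ, htop, -, hlabel, -⟩ := exists_sync_times hs (PortMachine.run_of_isRun hrun)
  have hcross : ∃ᶠ i in Filter.atTop,
      tr (κ i) ∈ (trackTransducer hT).Δ ∧ ((trackMachine hT).label (tr (κ i))).2 = some u :=
    (infOften_iff_frequently.1 hu).mono fun i hi =>
      ⟨(hrun.2 _).1, (hlabel i).trans (congrArg some hi)⟩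
  obtain ⟨t, ht, -, htu⟩ := exists_infOften_of_letter
    (p := fun t => t ∈ (trackTransducer hT).Δ ∧ ((trackMachine hT).label t).2 = some u)
    (fun _ ht => letter_of_label ht.1 ht.2) (htop.frequently hcross)
  exact ⟨t, ht, htu⟩

theorem exists_infOften_color_le (c : T.CIdx) {t : (T.Track × Bool) × Option A × (T.Track × Bool)}
    (ht : InfOften tr t) : ∃ u, InfOften (fun i => (s i, w i, s (i + 1))) u ∧
      T.color c u ≤ (trackTransducer hT).color c t := by
  have hmachine := PortMachine.run_of_isRun hrun
  have hpos := hmachine.tendsto_position not_markBox_start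
  obtain ⟨-, -, -, -, hon⟩ := exists_sync_times hs hmachine
  rcases hl : ((trackMachine hT).label t).2 with _ | u
  · obtain ⟨a, ha, hw⟩ := exists_letter_of_infOften hrun hpos ht
    obtain ⟨u, hu, rfl⟩ := exists_infOften_of_letter (tr := fun i => (s i, w i, s (i + 1)))
      (fun _ => id) (infOften_iff_frequently.1 hw)
    refine ⟨u, hu, ?_⟩
    simp only [trackTransducer, hl, ha, Option.elim]
    exact Finset.le_sup (f := fun e : T.Q × T.Q => T.color c (e.1, u.2.1, e.2))
      (Finset.mem_univ (u.1, u.2.2))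
  · refine ⟨u, infOften_of_frequently_later hpos ?_, ?_⟩
    · refine (infOften_iff_frequently.1 ht).mono fun k hk => ?_
      obtain ⟨j, hle, hj⟩ := hon k u (hk ▸ hl)
      exact ⟨j, hle, hj.symm⟩
    · simp only [trackTransducer, hl, Option.elim, le_refl]

theorem trackTransducer_parityCond_iff : ParityCond (trackTransducer hT).toParityAut tr ↔
    OnewayParityCond T.toOnewayAut fun i => (s i, w i, s (i + 1)) := by
  refine forall_congr' fun c => iff_of_eq (congrArg Even ?_)
  set recurrent := {m : ℕ | ∃ u, InfOften (fun i => (s i, w i, s (i + 1))) u ∧ T.color c u = m}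
  set recurrent' := {m : ℕ | ∃ t, InfOften tr t ∧ (trackTransducer hT).color c t = m}
  have hsub : recurrent ⊆ recurrent' := by
    rintro _ ⟨u, hu, rfl⟩
    obtain ⟨t, ht, htu⟩ := exists_infOften_label hs hrun hu
    exact ⟨t, ht, by simp only [trackTransducer, htu, Option.elim]⟩
  have hle : ∀ m ∈ recurrent', ∃ m' ∈ recurrent, m' ≤ m := by
    rintro _ ⟨t, ht, rfl⟩
    obtain ⟨u, hu, hut⟩ := exists_infOften_color_le hs hrun c ht
    exact ⟨_, ⟨u, hu, rfl⟩, hut⟩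
  have := (monotoneOn_id (s := recurrent')).csInf_eq_of_subset_of_forall_exists_le
    (OrderBot.bddBelow _) hsub hle
  rw [Set.image_id, Set.image_id] at this
  exact this.symm

theorem trackTransducer_flattenTo_iff {x : ℕ → B} :
    FlattenTo (fun k => (trackTransducer hT).out (tr k)) x ↔
      (∀ i, IsPrefixOf (regVal T w s i T.outReg) x) ∧
        ∀ m, ∃ i, m ≤ (regVal T w s i T.outReg).length := by
  obtain ⟨κ, htop, hout, -⟩ := exists_sync_times hs (PortMachine.run_of_isRun hrun)
  simp only [← hout]
  exact flattenTo_iff_of_tendsto htop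

omit hs in
theorem trackTransducer_readsWhole : ReadsWhole (trackTransducer hT).toTwoWayAut cfg := by
  have hpos := (PortMachine.run_of_isRun hrun).tendsto_position not_markBox_start
  exact fun n => (hpos.eventually_ge_atTop n).exists

omit hs hrun in
theorem trackTransducer_realizes_iff {x : ℕ → B} :
    (trackTransducer hT).Realizes w x ↔ T.Realizes w x := by
  constructor
  · rintro ⟨cfg, tr, hrun, -, hparity, hout⟩
    obtain ⟨s, hs⟩ := exists_onewayRun_of_run (PortMachine.run_of_isRun hrun)
    exact ⟨s, hs, (trackTransducer_parityCond_iff hs hrun).1 hparity,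
      (trackTransducer_flattenTo_iff hs hrun).1 hout⟩
  · rintro ⟨s, hs, hparity, hout⟩
    obtain ⟨cfg, o, hmachine⟩ := exists_run_of_onewayRun (hT := hT) hs
    obtain ⟨tr, hrun⟩ := hmachine.exists_isRun
    exact ⟨cfg, tr, hrun, trackTransducer_readsWhole hrun,
      (trackTransducer_parityCond_iff hs hrun).2 hparity,
      (trackTransducer_flattenTo_iff hs hrun).2 hout⟩

end Transducer

theorem cpsst_to_rbt_general {A B : Type} (T : CPSST A B) (hT : OnewayDet T.toOnewayAut) :
    ∃ S : TwoWayTrans A B,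
      Reversible S.toTwoWayAut ∧
      Fintype.card S.Q = 16 * Fintype.card T.Q ^ 2 * Fintype.card T.R ∧
      ∀ w x, S.Realizes w x ↔ T.Realizes w x := by
  let : LinearOrder T.Q :=
    LinearOrder.lift' (Fintype.equivFin T.Q) (Fintype.equivFin T.Q).injective
  exact ⟨trackTransducer hT, PortMachine.toAut_reversible, card_trackTransducer hT,
    fun _ _ => trackTransducer_realizes_iff⟩

/-- Every copyless parity streaming string transducer `T` with `n` states
and `m` registers is equivalent to a reversible two-way parity transducer `S` with at most
`C·n²·m` states, for some absolute constant `C`. -/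
theorem cpsst_to_rbt :
    ∃ C : ℕ, ∀ (A B : Type) [Fintype A] [Fintype B] (T : CPSST A B) (n m : ℕ),
      OnewayDet T.toOnewayAut →
      Fintype.card T.Q = n → Fintype.card T.R = m →
      ∃ S : TwoWayTrans A B,
        Reversible S.toTwoWayAut ∧
        Fintype.card S.Q ≤ C * n ^ 2 * m ∧
        (∀ w x, S.Realizes w x ↔ T.Realizes w x) := by
  refine ⟨16, fun A B _ _ T n m hT hn hm => ?_⟩
  obtain ⟨S, hrev, hcard, hS⟩ := cpsst_to_rbt_general T hT
  exact ⟨S, hrev, by rw [hcard, hn, hm], hS⟩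

end Paper
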